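/- arXiv:1602.08896 — 2 statements merged into one kernel-verified Lean document; each statement's English description precedes it below -/
import Mathlib

section
/- Let x₊, x₋ : ℝ → ℝ be twice differentiable solutions of ẍ(t) + t²x(t) = 0 with x₊ even, x₋ odd, and Wronskian x₊ẋ₋ − ẋ₊x₋ = 1. For t > 0 define a_±(t) = (t·x_±(t) + i·ẋ_±(t))/√(2t), U(t) = −2i·a₊(t)·a₋(t), and V̄(t) = 2i·Re(conj(a₊(t))·a₋(t)). Then as t → +∞: U(t)·e^{i(t² − π/2)} → −√2·i and V̄(t) → i. -/
open Real Filter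

/-- Instantaneous complex coordinate `a(t) = (t·x(t) + i·ẋ(t))/√(2t)` at frequency `ω = t`. -/
noncomputable def aInst (f g : ℝ → ℝ) (t : ℝ) : ℂ :=
  ((t * f t : ℝ) + Complex.I * (g t : ℝ)) / ((Real.sqrt (2 * t) : ℝ) : ℂ)

/-!
The parabolic cylinder function `φ(z) = √π D_{-1/2}(z) = e^{-z²/4} ∫ e^{-zs² - s⁴/2} ds` solves
`φ'' = z²φ/4`, so `D(t) = φ((1 + i)t)` solves `ẍ + t²x = 0`. A Gaussian limit in its integral shows
that `D` is purely of positive frequency at `+∞`: its complex coordinate is asymptotic to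
`√2 (π/(1+i))^{1/2} e^{-it²/2}`, while that of its conjugate tends to `0`. Writing a real solution
as `x = 2 Re(cD)`, where `c` is read off the initial data at `0`, therefore gives
`a(t) e^{it²/2} → c √2 (π/(1+i))^{1/2}`. Parity and the Wronskian leave only the product
`φ(0) φ'(0)` undetermined, which the reflection formula for `Γ` at `1/4` evaluates.
-/

section WeberAsymptotics

open MeasureTheory
open Complex (I)
open scoped Topology ComplexConjugate

/-- The integrand `e^{-(zs² + s⁴/2)}` of the parabolic cylinder function `D_{-1/2}`, after the
substitution `r = s²` in its Laplace integral `∫₀^∞ e^{-zr - r²/2} r^{-1/2} dr`. -/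
noncomputable def quarticKernel (z : ℂ) (s : ℝ) : ℂ := Complex.exp (-(z * s ^ 2 + s ^ 4 / 2))

/-- The `n`-th moment of `quarticKernel z` over the real line. -/
noncomputable def quarticMoment (n : ℕ) (z : ℂ) : ℂ := ∫ s : ℝ, (s : ℂ) ^ n * quarticKernel z s

lemma norm_quarticKernel (z : ℂ) (s : ℝ) :
    ‖quarticKernel z s‖ = rexp (-(z.re * s ^ 2 + s ^ 4 / 2)) := by
  have hquad : (z * s ^ 2).re = z.re * s ^ 2 := by
    rw [← Complex.ofReal_pow, Complex.re_mul_ofReal]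
  have hquart : ((s : ℂ) ^ 4 / 2).re = s ^ 4 / 2 := by norm_cast
  rw [quarticKernel, Complex.norm_exp, Complex.neg_re, Complex.add_re, hquad, hquart]

lemma norm_pow_mul_quarticKernel_le (n : ℕ) {R : ℝ} {z : ℂ} (hz : -R ≤ z.re) (s : ℝ) :
    ‖(s : ℂ) ^ n * quarticKernel z s‖ ≤
      rexp ((R + 1) ^ 2 / 2) * ‖s ^ n * rexp (-1 * s ^ 2)‖ := by
  -- complete the square: `R s² - s⁴/2 = (R + 1)²/2 - s² - (s² - (R + 1))²/2`
  have hexp : rexp (-(z.re * s ^ 2 + s ^ 4 / 2)) ≤ rexp ((R + 1) ^ 2 / 2) * rexp (-1 * s ^ 2) := by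
    rw [← Real.exp_add, Real.exp_le_exp]
    nlinarith [sq_nonneg (s ^ 2 - (R + 1)), mul_le_mul_of_nonneg_right hz (sq_nonneg s)]
  calc ‖(s : ℂ) ^ n * quarticKernel z s‖
      = ‖s‖ ^ n * rexp (-(z.re * s ^ 2 + s ^ 4 / 2)) := by
        rw [norm_mul, norm_pow, Complex.norm_real, norm_quarticKernel]
    _ ≤ ‖s‖ ^ n * (rexp ((R + 1) ^ 2 / 2) * rexp (-1 * s ^ 2)) := by gcongr
    _ = rexp ((R + 1) ^ 2 / 2) * ‖s ^ n * rexp (-1 * s ^ 2)‖ := by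
        rw [norm_mul, norm_pow, Real.norm_of_nonneg (Real.exp_pos _).le]
        ring

lemma integrable_pow_mul_exp_neg_sq (n : ℕ) : Integrable fun s : ℝ ↦ s ^ n * rexp (-1 * s ^ 2) := by
  simpa using integrable_rpow_mul_exp_neg_mul_sq one_pos
    (show (-1 : ℝ) < n by linarith [n.cast_nonneg (α := ℝ)])

lemma integrable_pow_mul_quarticKernel (n : ℕ) (z : ℂ) :
    Integrable fun s : ℝ ↦ (s : ℂ) ^ n * quarticKernel z s := by
  refine Integrable.mono' ((integrable_pow_mul_exp_neg_sq n).norm.const_mul _) ?_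
    (.of_forall (norm_pow_mul_quarticKernel_le n (neg_neg z.re).le))
  unfold quarticKernel
  exact Continuous.aestronglyMeasurable (by fun_prop)

lemma hasDerivAt_quarticKernel_left (z : ℂ) (s : ℝ) :
    HasDerivAt (quarticKernel · s) (-(s ^ 2 * quarticKernel z s)) z := by
  have h := (((hasDerivAt_id z).mul_const ((s : ℂ) ^ 2)).add_const ((s : ℂ) ^ 4 / 2)).neg.cexp
  exact h.congr_deriv (by simp only [id, quarticKernel, Pi.neg_apply]; ring)

lemma hasDerivAt_quarticKernel_right (z : ℂ) (s : ℝ) :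
    HasDerivAt (quarticKernel z) (-((2 * z * s + 2 * s ^ 3) * quarticKernel z s)) s := by
  have hs := (hasDerivAt_id s).ofReal_comp
  have h := (((hs.pow 2).const_mul z).add ((hs.pow 4).div_const 2)).neg.cexp
  refine h.congr_deriv ?_
  simp only [id, Pi.pow_apply, Pi.neg_apply, Pi.add_apply, Nat.cast_ofNat, Nat.add_one_sub_one,
    pow_one, Complex.ofReal_one, mul_one, quarticKernel]
  ring

lemma hasDerivAt_quarticMoment (n : ℕ) (z : ℂ) :
    HasDerivAt (quarticMoment n) (-quarticMoment (n + 2) z) z := by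
  have hbound (s : ℝ) (w : ℂ) (hw : w ∈ Metric.ball z 1) :
      ‖-((s : ℂ) ^ (n + 2) * quarticKernel w s)‖ ≤
        rexp ((-z.re + 1 + 1) ^ 2 / 2) * ‖s ^ (n + 2) * rexp (-1 * s ^ 2)‖ := by
    have hre : -(-z.re + 1) ≤ w.re := by
      have := (Complex.abs_re_le_norm (w - z)).trans_lt (mem_ball_iff_norm.mp hw)
      rw [Complex.sub_re] at this
      linarith [(abs_lt.mp this).1]
    rw [norm_neg]
    exact norm_pow_mul_quarticKernel_le (n + 2) hre s
  have hderiv (s : ℝ) (w : ℂ) : HasDerivAt (fun w ↦ (s : ℂ) ^ n * quarticKernel w s)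
      (-((s : ℂ) ^ (n + 2) * quarticKernel w s)) w :=
    ((hasDerivAt_quarticKernel_left w s).const_mul ((s : ℂ) ^ n)).congr_deriv (by ring)
  have h := (hasDerivAt_integral_of_dominated_loc_of_deriv_le
    (Metric.ball_mem_nhds z one_pos)
    (.of_forall fun w ↦ (integrable_pow_mul_quarticKernel n w).aestronglyMeasurable)
    (integrable_pow_mul_quarticKernel n z)
    (integrable_pow_mul_quarticKernel (n + 2) z).neg.aestronglyMeasurable
    (.of_forall hbound) ((integrable_pow_mul_exp_neg_sq (n + 2)).norm.const_mul _)
    (.of_forall fun s w _ ↦ hderiv s w)).2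
  rwa [integral_neg] at h

-- Integration by parts: the integral of `(s^{n+1} e^{-(zs² + s⁴/2)})'` vanishes.
lemma quarticMoment_recurrence (n : ℕ) (z : ℂ) :
    (n + 1) * quarticMoment n z =
      2 * z * quarticMoment (n + 2) z + 2 * quarticMoment (n + 4) z := by
  have hint (m : ℕ) (c : ℂ) := (integrable_pow_mul_quarticKernel m z).const_mul c
  have hderiv (s : ℝ) : HasDerivAt (fun s : ℝ ↦ (s : ℂ) ^ (n + 1) * quarticKernel z s)
      ((n + 1) * (s ^ n * quarticKernel z s) - (2 * z * (s ^ (n + 2) * quarticKernel z s) +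
        2 * (s ^ (n + 4) * quarticKernel z s))) s :=
    (((hasDerivAt_id s).ofReal_comp.pow (n + 1)).mul
      (hasDerivAt_quarticKernel_right z s)).congr_deriv <| by
        simp only [Nat.cast_add, Nat.cast_one, id, add_tsub_cancel_right, Complex.ofReal_one,
          Pi.pow_apply]
        ring
  have hzero := integral_eq_zero_of_hasDerivAt_of_integrable hderiv
    ((hint n _).sub ((hint (n + 2) _).add (hint (n + 4) _)))
    (integrable_pow_mul_quarticKernel (n + 1) z)
  rwa [integral_sub (hint n _) ((hint (n + 2) _).fun_add (hint (n + 4) _)),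
    integral_add (hint (n + 2) _) (hint (n + 4) _), integral_const_mul, integral_const_mul,
    integral_const_mul, sub_eq_zero] at hzero

lemma exists_norm_quarticMoment_le (n : ℕ) :
    ∃ C, ∀ z : ℂ, 0 ≤ z.re → ‖quarticMoment n z‖ ≤ C :=
  ⟨_, fun _ hz ↦ norm_integral_le_of_norm_le
    ((integrable_pow_mul_exp_neg_sq n).norm.const_mul _)
    (.of_forall (norm_pow_mul_quarticKernel_le n (neg_zero.le.trans hz)))⟩

lemma tendsto_quarticMoment_div_sqrt (n : ℕ) {c : ℂ} (hc : 0 ≤ c.re) :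
    Tendsto (fun t : ℝ ↦ quarticMoment n (c * t) / (√(2 * t) : ℂ)) atTop (𝓝 0) := by
  obtain ⟨C, hC⟩ := exists_norm_quarticMoment_le n
  have hsqrt : Tendsto (fun t : ℝ ↦ √(2 * t)) atTop atTop :=
    tendsto_sqrt_atTop.comp (tendsto_id.const_mul_atTop two_pos)
  refine squeeze_zero_norm' ?_ (hsqrt.const_div_atTop C)
  filter_upwards [eventually_ge_atTop 0] with t ht
  rw [norm_div, Complex.norm_real, Real.norm_of_nonneg (Real.sqrt_nonneg _)]
  gcongr
  exact hC _ (by rw [Complex.re_mul_ofReal]; positivity)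

-- Substitute `u = √t s`.
lemma sqrt_mul_quarticMoment_zero (c : ℂ) {t : ℝ} (ht : 0 < t) :
    (√t : ℂ) * quarticMoment 0 (c * t) =
      ∫ u : ℝ, Complex.exp (-(c * u ^ 2 + u ^ 4 / 2 * ((t ^ 2)⁻¹ : ℝ))) := by
  have hsqrt : 0 < √t := Real.sqrt_pos.mpr ht
  have hsq : (√t : ℂ) ^ 2 = t := by rw [← Complex.ofReal_pow, Real.sq_sqrt ht.le]
  have hfour : (√t : ℂ) ^ 4 = t ^ 2 := by rw [← hsq]; ring
  have ht0 : (t : ℂ) ≠ 0 := by exact_mod_cast ht.ne'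
  have hkernel (s : ℝ) : (s : ℂ) ^ 0 * quarticKernel (c * t) s = Complex.exp
      (-(c * (√t * s : ℝ) ^ 2 + (√t * s : ℝ) ^ 4 / 2 * ((t ^ 2)⁻¹ : ℝ))) := by
    rw [pow_zero, one_mul, quarticKernel]
    push_cast
    rw [mul_pow, mul_pow, hsq, hfour]
    field_simp
  simp only [quarticMoment, hkernel]
  rw [Measure.integral_comp_mul_left (fun u : ℝ ↦
      Complex.exp (-(c * u ^ 2 + u ^ 4 / 2 * ((t ^ 2)⁻¹ : ℝ)))) √t,
    abs_of_pos (inv_pos.mpr hsqrt), Complex.real_smul, Complex.ofReal_inv,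
    mul_inv_cancel_left₀ (Complex.ofReal_ne_zero.mpr hsqrt.ne')]

lemma norm_exp_neg_mul_sq_add_le (c : ℂ) (u : ℝ) {r : ℝ} (hr : 0 ≤ r) :
    ‖Complex.exp (-(c * u ^ 2 + u ^ 4 / 2 * r))‖ ≤ ‖Complex.exp (-c * u ^ 2)‖ := by
  have hquart : ((u : ℂ) ^ 4 / 2 * r).re = u ^ 4 / 2 * r := by norm_cast
  rw [Complex.norm_exp, Complex.norm_exp, Real.exp_le_exp, neg_mul, Complex.neg_re,
    Complex.add_re, hquart, Complex.neg_re]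
  linarith [show 0 ≤ u ^ 4 / 2 * r by positivity]

lemma tendsto_sqrt_mul_quarticMoment_zero {c : ℂ} (hc : 0 < c.re) :
    Tendsto (fun t : ℝ ↦ (√t : ℂ) * quarticMoment 0 (c * t)) atTop
      (𝓝 ((π / c) ^ (1 / 2 : ℂ))) := by
  have hinv : Tendsto (fun t : ℝ ↦ (((t ^ 2)⁻¹ : ℝ) : ℂ)) atTop (𝓝 0) :=
    (Complex.continuous_ofReal.tendsto' 0 0 Complex.ofReal_zero).comp
      (tendsto_inv_atTop_zero.comp (tendsto_pow_atTop two_ne_zero))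
  have hlim : Tendsto (fun t : ℝ ↦
      ∫ u : ℝ, Complex.exp (-(c * u ^ 2 + u ^ 4 / 2 * ((t ^ 2)⁻¹ : ℝ)))) atTop
      (𝓝 (∫ u : ℝ, Complex.exp (-c * u ^ 2))) := by
    refine tendsto_integral_filter_of_dominated_convergence _
      (.of_forall fun t ↦ Continuous.aestronglyMeasurable (by fun_prop))
      (.of_forall fun t ↦ .of_forall fun u ↦
        norm_exp_neg_mul_sq_add_le c u (inv_nonneg.mpr (sq_nonneg t)))
      (integrable_cexp_neg_mul_sq hc).norm (.of_forall fun u ↦ ?_)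
    simpa using ((hinv.const_mul ((u : ℂ) ^ 4 / 2)).const_add (c * u ^ 2)).neg.cexp
  rw [← integral_gaussian_complex hc]
  refine hlim.congr' ?_
  filter_upwards [eventually_gt_atTop 0] with t ht
  exact (sqrt_mul_quarticMoment_zero c ht).symm

lemma quarticMoment_zero_right {n : ℕ} (hn : Even n) :
    quarticMoment n 0 =
      ((2 ^ ((n + 1) / 4 : ℝ) / 2 * Real.Gamma ((n + 1) / 4) : ℝ) : ℂ) := by
  have habs (s : ℝ) : (s : ℂ) ^ n * quarticKernel 0 s =
      ((|s| ^ (n : ℝ) * rexp (-(1 / 2) * |s| ^ (4 : ℝ)) : ℝ) : ℂ) := by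
    rw [Real.rpow_natCast, hn.pow_abs, show (4 : ℝ) = (4 : ℕ) by norm_num, Real.rpow_natCast,
      Even.pow_abs (by decide), quarticKernel]
    push_cast
    ring_nf
  simp only [quarticMoment, habs]
  rw [integral_complex_ofReal,
    integral_comp_abs (f := fun s ↦ s ^ (n : ℝ) * rexp (-(1 / 2) * s ^ (4 : ℝ))),
    integral_rpow_mul_exp_neg_mul_rpow four_pos
      (show (-1 : ℝ) < n by linarith [n.cast_nonneg (α := ℝ)]) one_half_pos,
    neg_div, one_div, Real.inv_rpow two_pos.le, Real.rpow_neg two_pos.le, inv_inv]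
  congr 1
  ring

lemma quarticMoment_zero_mul_quarticMoment_two :
    quarticMoment 0 0 * quarticMoment 2 0 = π / √2 := by
  have hGamma : Real.Gamma (1 / 4) * Real.Gamma (3 / 4) = π / (√2 / 2) := by
    rw [← Real.sin_pi_div_four, show (3 / 4 : ℝ) = 1 - 1 / 4 by norm_num,
      Real.Gamma_mul_Gamma_one_sub, mul_one_div]
  have hpow : (2 : ℝ) ^ (1 / 4 : ℝ) * 2 ^ (3 / 4 : ℝ) = 2 := by
    rw [← Real.rpow_add two_pos]
    norm_num
  rw [quarticMoment_zero_right Even.zero, quarticMoment_zero_right even_two]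
  norm_cast
  norm_num only [Nat.cast_zero, Nat.cast_ofNat]
  linear_combination (1 / 4 * Real.Gamma (1 / 4) * Real.Gamma (3 / 4)) * hpow + 1 / 2 * hGamma

lemma quarticMoment_zero_right_ne_zero {n : ℕ} (hn : Even n) : quarticMoment n 0 ≠ 0 := by
  rw [quarticMoment_zero_right hn, Complex.ofReal_ne_zero]
  positivity

lemma conj_quarticMoment_zero_right {n : ℕ} (hn : Even n) :
    conj (quarticMoment n 0) = quarticMoment n 0 := by
  rw [quarticMoment_zero_right hn, Complex.conj_ofReal]

/-- The parabolic cylinder function `√π D_{-1/2}(z)`, in an integral form valid for all `z`. -/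
noncomputable def parabolicCylinder (z : ℂ) : ℂ := Complex.exp (-(z ^ 2 / 4)) * quarticMoment 0 z

/-- The derivative of `parabolicCylinder`, in terms of moments. -/
noncomputable def parabolicCylinderDeriv (z : ℂ) : ℂ :=
  -(Complex.exp (-(z ^ 2 / 4)) * (quarticMoment 2 z + z / 2 * quarticMoment 0 z))

lemma hasDerivAt_exp_neg_sq_div_four (z : ℂ) :
    HasDerivAt (fun z : ℂ ↦ Complex.exp (-(z ^ 2 / 4)))
      (-(z / 2) * Complex.exp (-(z ^ 2 / 4))) z :=
  ((hasDerivAt_pow 2 z).div_const 4).fun_neg.cexp.congr_deriv (by norm_num; ring)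

lemma hasDerivAt_parabolicCylinder (z : ℂ) :
    HasDerivAt parabolicCylinder (parabolicCylinderDeriv z) z :=
  ((hasDerivAt_exp_neg_sq_div_four z).mul (hasDerivAt_quarticMoment 0 z)).congr_deriv
    (by rw [parabolicCylinderDeriv]; ring)

lemma hasDerivAt_parabolicCylinderDeriv (z : ℂ) :
    HasDerivAt parabolicCylinderDeriv (z ^ 2 / 4 * parabolicCylinder z) z := by
  have hrec := quarticMoment_recurrence 0 z
  have h := ((hasDerivAt_exp_neg_sq_div_four z).mul ((hasDerivAt_quarticMoment 2 z).add
    (((hasDerivAt_id z).div_const 2).mul (hasDerivAt_quarticMoment 0 z)))).neg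
  refine h.congr_deriv ?_
  simp only [Pi.add_apply, Pi.mul_apply, id, parabolicCylinder]
  norm_num at hrec ⊢
  linear_combination (-(Complex.exp (-(z ^ 2 / 4))) / 2) * hrec

/-- `x` is a complex-valued solution of the Weber equation `ẍ + t²x = 0`, with velocity `v`. -/
structure IsWeberSolution (x v : ℝ → ℂ) : Prop where
  hasDerivAt_position (t : ℝ) : HasDerivAt x (v t) t
  hasDerivAt_velocity (t : ℝ) : HasDerivAt v (-(t ^ 2 * x t)) t

namespace IsWeberSolution

variable {x v y w z u : ℝ → ℂ}

lemma of_real {x v : ℝ → ℝ} (hx : ∀ t, HasDerivAt x (v t) t)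
    (hv : ∀ t, HasDerivAt v (-(t ^ 2 * x t)) t) :
    IsWeberSolution (fun t ↦ x t) (fun t ↦ v t) where
  hasDerivAt_position t := (hx t).ofReal_comp
  hasDerivAt_velocity t := (hv t).ofReal_comp.congr_deriv (by push_cast; rfl)

lemma star (hx : IsWeberSolution x v) :
    IsWeberSolution (fun t ↦ conj (x t)) (fun t ↦ conj (v t)) where
  hasDerivAt_position t := (hx.hasDerivAt_position t).star
  hasDerivAt_velocity t := (hx.hasDerivAt_velocity t).star.congr_deriv (by simp)

lemma linearCombination (hx : IsWeberSolution x v) (hy : IsWeberSolution y w) (c d : ℂ) :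
    IsWeberSolution (fun t ↦ c * x t + d * y t) (fun t ↦ c * v t + d * w t) where
  hasDerivAt_position t :=
    ((hx.hasDerivAt_position t).const_mul c).add ((hy.hasDerivAt_position t).const_mul d)
  hasDerivAt_velocity t :=
    (((hx.hasDerivAt_velocity t).const_mul c).add
      ((hy.hasDerivAt_velocity t).const_mul d)).congr_deriv (by ring)

lemma wronskian_eq (hx : IsWeberSolution x v) (hy : IsWeberSolution y w) (s t : ℝ) :
    x s * w s - v s * y s = x t * w t - v t * y t := by
  have h (t : ℝ) : HasDerivAt (fun t ↦ x t * w t - v t * y t) 0 t :=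
    (((hx.hasDerivAt_position t).mul (hy.hasDerivAt_velocity t)).sub
      ((hx.hasDerivAt_velocity t).mul (hy.hasDerivAt_position t))).congr_deriv (by ring)
  exact is_const_of_deriv_eq_zero (fun t ↦ (h t).differentiableAt) (fun t ↦ (h t).deriv) s t

lemma eq_linearCombination (hx : IsWeberSolution x v) (hy : IsWeberSolution y w)
    (hz : IsWeberSolution z u) (hW : y 0 * u 0 - w 0 * z 0 ≠ 0) {c d : ℂ}
    (hpos : x 0 = c * y 0 + d * z 0) (hvel : v 0 = c * w 0 + d * u 0) (t : ℝ) :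
    x t = c * y t + d * z t ∧ v t = c * w t + d * u t := by
  have he := hx.linearCombination (hy.linearCombination hz c d) 1 (-1)
  have hey := he.wronskian_eq hy t 0
  have hez := he.wronskian_eq hz t 0
  rw [hy.wronskian_eq hz 0 t] at hW
  rw [hpos, hvel] at hey hez
  constructor
  · refine mul_right_cancel₀ hW ?_
    linear_combination y t * hez - z t * hey
  · refine mul_right_cancel₀ hW ?_
    linear_combination w t * hez - u t * hey

end IsWeberSolution

/-- The solution `D(t) = √π D_{-1/2}((1 + i)t)` of the Weber equation, which has positive frequency
at `+∞`. -/
noncomputable def posFreqSolution (t : ℝ) : ℂ := parabolicCylinder ((1 + I) * t)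

/-- The velocity of `posFreqSolution`. -/
noncomputable def posFreqVelocity (t : ℝ) : ℂ := (1 + I) * parabolicCylinderDeriv ((1 + I) * t)

lemma sq_one_add_I_mul (t : ℂ) : ((1 + I) * t) ^ 2 = 2 * I * t ^ 2 := by
  linear_combination t ^ 2 * Complex.I_sq

lemma isWeberSolution_posFreqSolution : IsWeberSolution posFreqSolution posFreqVelocity where
  hasDerivAt_position t :=
    ((hasDerivAt_parabolicCylinder _).comp (t : ℂ)
      (hasDerivAt_const_mul (1 + I))).comp_ofReal.congr_deriv
      (by rw [posFreqVelocity]; ring)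
  hasDerivAt_velocity t :=
    (((hasDerivAt_parabolicCylinderDeriv _).comp (t : ℂ)
      (hasDerivAt_const_mul (1 + I))).const_mul (1 + I)).comp_ofReal.congr_deriv <| by
        rw [posFreqSolution, sq_one_add_I_mul]
        linear_combination (t ^ 2 / 2 * I * parabolicCylinder ((1 + I) * t) + t ^ 2 *
          parabolicCylinder ((1 + I) * t)) * Complex.I_sq

lemma posFreqSolution_zero : posFreqSolution 0 = quarticMoment 0 0 := by
  simp [posFreqSolution, parabolicCylinder]

lemma posFreqVelocity_zero : posFreqVelocity 0 = -((1 + I) * quarticMoment 2 0) := by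
  simp [posFreqVelocity, parabolicCylinderDeriv]

/-- The coefficient `c` for which the real solution with initial data `(x₀, v₀)` is `2 Re(cD)`,
where `D` is `posFreqSolution`. -/
noncomputable def posFreqCoeff (x₀ v₀ : ℝ) : ℂ :=
  (1 + I) * x₀ / (2 * quarticMoment 0 0) + I * v₀ / (2 * quarticMoment 2 0)

lemma eq_posFreqCoeff_mul_add_conj {x v : ℝ → ℝ}
    (hx : IsWeberSolution (fun t ↦ x t) (fun t ↦ v t)) (t : ℝ) :
    x t = posFreqCoeff (x 0) (v 0) * posFreqSolution t +
        conj (posFreqCoeff (x 0) (v 0)) * conj (posFreqSolution t) ∧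
      v t = posFreqCoeff (x 0) (v 0) * posFreqVelocity t +
        conj (posFreqCoeff (x 0) (v 0)) * conj (posFreqVelocity t) := by
  have h0 := quarticMoment_zero_right_ne_zero Even.zero
  have h2 := quarticMoment_zero_right_ne_zero even_two
  refine hx.eq_linearCombination isWeberSolution_posFreqSolution
    isWeberSolution_posFreqSolution.star ?_ ?_ ?_ t <;>
  simp only [posFreqSolution_zero, posFreqVelocity_zero, posFreqCoeff, map_add, map_mul, map_neg,
    map_one, map_div₀, map_ofNat, Complex.conj_I, Complex.conj_ofReal,
    conj_quarticMoment_zero_right Even.zero, conj_quarticMoment_zero_right even_two]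
  · have : 2 * I * quarticMoment 0 0 * quarticMoment 2 0 ≠ 0 := by simp [h0, h2]
    convert this using 1
    ring
  · field_simp
    ring
  · field_simp
    linear_combination (2 * v 0 * quarticMoment 0 0 + 2 * x 0 * quarticMoment 2 0) * Complex.I_sq

/-- The phase `e^{i∫₀ᵗ ω_s ds} = e^{it²/2}` accumulated by the frequency `ω_s = s`. -/
noncomputable def adiabaticPhase (t : ℝ) : ℂ := Complex.exp (I * t ^ 2 / 2)

lemma conj_adiabaticPhase (t : ℝ) :
    conj (adiabaticPhase t) = Complex.exp (-(((1 + I) * t) ^ 2 / 4)) := by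
  rw [adiabaticPhase, ← Complex.exp_conj, sq_one_add_I_mul]
  congr 1
  simp only [map_div₀, map_mul, map_pow, map_ofNat, Complex.conj_I, Complex.conj_ofReal]
  ring

lemma norm_adiabaticPhase (t : ℝ) : ‖adiabaticPhase t‖ = 1 := by
  rw [adiabaticPhase, show I * t ^ 2 / 2 = ((t ^ 2 / 2 : ℝ) : ℂ) * I by push_cast; ring,
    Complex.norm_exp_ofReal_mul_I]

lemma conj_adiabaticPhase_mul_self (t : ℝ) : conj (adiabaticPhase t) * adiabaticPhase t = 1 := by
  rw [Complex.conj_mul', norm_adiabaticPhase]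
  norm_num

lemma exp_I_mul_sq_sub_pi_div_two (t : ℝ) :
    Complex.exp (I * ((t : ℂ) ^ 2 - (π : ℂ) / 2)) = -I * adiabaticPhase t ^ 2 := by
  rw [← Complex.exp_neg_pi_div_two_mul_I, adiabaticPhase, ← Complex.exp_nat_mul, ← Complex.exp_add]
  congr 1
  push_cast
  ring

/-- The extension of `aInst` to complex-valued trajectories. -/
noncomputable def complexCoord (x v : ℝ → ℂ) (t : ℝ) : ℂ := (t * x t + I * v t) / (√(2 * t) : ℂ)

lemma aInst_eq_linearCombination {x v : ℝ → ℝ} {y w z u : ℝ → ℂ} {c d : ℂ} {t : ℝ}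
    (hx : x t = c * y t + d * z t) (hv : v t = c * w t + d * u t) :
    aInst x v t = c * complexCoord y w t + d * complexCoord z u t := by
  rw [aInst, Complex.ofReal_mul, hx, hv, complexCoord, complexCoord]
  ring

lemma complexCoord_posFreq_mul_phase (t : ℝ) :
    complexCoord posFreqSolution posFreqVelocity t * adiabaticPhase t =
      (2 * t * quarticMoment 0 ((1 + I) * t) + (1 - I) * quarticMoment 2 ((1 + I) * t)) /
        (√(2 * t) : ℂ) := by
  rw [complexCoord, div_mul_eq_mul_div, posFreqSolution, posFreqVelocity, parabolicCylinder,
    parabolicCylinderDeriv, ← conj_adiabaticPhase]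
  congr 1
  linear_combination (2 * t * quarticMoment 0 ((1 + I) * t) +
      (1 - I) * quarticMoment 2 ((1 + I) * t)) * conj_adiabaticPhase_mul_self t -
    conj (adiabaticPhase t) * adiabaticPhase t * (quarticMoment 2 ((1 + I) * t) +
      (1 + I / 2) * t * quarticMoment 0 ((1 + I) * t)) * Complex.I_sq

lemma complexCoord_conj_posFreq (t : ℝ) :
    complexCoord (fun t ↦ conj (posFreqSolution t)) (fun t ↦ conj (posFreqVelocity t)) t =
      -(1 + I) * adiabaticPhase t * conj (quarticMoment 2 ((1 + I) * t) / (√(2 * t) : ℂ)) := by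
  have hconj : t * posFreqSolution t - I * posFreqVelocity t =
      (I - 1) * conj (adiabaticPhase t) * quarticMoment 2 ((1 + I) * t) := by
    rw [posFreqSolution, posFreqVelocity, parabolicCylinder, parabolicCylinderDeriv,
      ← conj_adiabaticPhase]
    linear_combination conj (adiabaticPhase t) * (quarticMoment 2 ((1 + I) * t) +
      (1 + I / 2) * t * quarticMoment 0 ((1 + I) * t)) * Complex.I_sq
  have h := congrArg conj hconj
  simp only [map_sub, map_mul, map_one, Complex.conj_I, Complex.conj_ofReal,
    Complex.conj_conj] at h
  rw [complexCoord, map_div₀, Complex.conj_ofReal, ← mul_div_assoc]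
  congr 1
  linear_combination h

/-- The limiting amplitude at `+∞` of the complex coordinate of `posFreqSolution`, with the phase
`adiabaticPhase` removed. -/
noncomputable def posFreqAmplitude : ℂ := √2 * (π / (1 + I)) ^ (1 / 2 : ℂ)

lemma posFreqAmplitude_sq : posFreqAmplitude ^ 2 = 2 * π / (1 + I) := by
  have hsqrt : (√2 : ℂ) ^ 2 = 2 := by exact_mod_cast Real.sq_sqrt two_pos.le
  have hcpow : ((π / (1 + I)) ^ (1 / 2 : ℂ)) ^ 2 = π / (1 + I) := by
    rw [one_div]
    exact Complex.cpow_ofNat_inv_pow _ 2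
  rw [posFreqAmplitude, mul_pow, hsqrt, hcpow, mul_div_assoc]

lemma conj_posFreqAmplitude_mul_self : conj posFreqAmplitude * posFreqAmplitude = √2 * π := by
  have hnorm : ‖1 + I‖ = √2 := by
    simp [Complex.norm_def, Complex.normSq_apply, one_add_one_eq_two]
  rw [Complex.conj_mul', ← Complex.ofReal_pow, ← norm_pow, posFreqAmplitude_sq, norm_div, hnorm,
    norm_mul, Complex.norm_real, Real.norm_of_nonneg pi_pos.le, Complex.norm_ofNat,
    mul_div_right_comm, Real.div_sqrt, Complex.ofReal_mul]

lemma tendsto_complexCoord_posFreq :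
    Tendsto (fun t ↦ complexCoord posFreqSolution posFreqVelocity t * adiabaticPhase t) atTop
      (𝓝 posFreqAmplitude) := by
  have h := ((tendsto_sqrt_mul_quarticMoment_zero (c := 1 + I) (by simp)).const_mul (√2 : ℂ)).add
    ((tendsto_quarticMoment_div_sqrt 2 (c := 1 + I) (by simp)).const_mul (1 - I))
  rw [mul_zero, add_zero] at h
  refine h.congr fun t ↦ ?_
  have hsqrt : (2 * t / √(2 * t) : ℂ) = √2 * √t := by
    exact_mod_cast Real.div_sqrt.trans (Real.sqrt_mul two_pos.le t)
  rw [complexCoord_posFreq_mul_phase]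
  linear_combination -quarticMoment 0 ((1 + I) * t) * hsqrt

lemma tendsto_complexCoord_conj_posFreq :
    Tendsto (fun t ↦ complexCoord (fun t ↦ conj (posFreqSolution t))
      (fun t ↦ conj (posFreqVelocity t)) t * adiabaticPhase t) atTop (𝓝 0) := by
  have h := (tendsto_quarticMoment_div_sqrt 2 (c := 1 + I) (by simp)).norm.const_mul ‖-(1 + I)‖
  rw [norm_zero, mul_zero] at h
  refine tendsto_zero_iff_norm_tendsto_zero.mpr (h.congr fun t ↦ ?_)
  rw [complexCoord_conj_posFreq, norm_mul, norm_mul, norm_mul, norm_adiabaticPhase,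
    Complex.norm_conj, mul_one, mul_one]

theorem tendsto_aInst_mul_adiabaticPhase {x v : ℝ → ℝ}
    (hx : ∀ t, HasDerivAt x (v t) t) (hv : ∀ t, HasDerivAt v (-(t ^ 2 * x t)) t) :
    Tendsto (fun t ↦ aInst x v t * adiabaticPhase t) atTop
      (𝓝 (posFreqCoeff (x 0) (v 0) * posFreqAmplitude)) := by
  have hdecomp := eq_posFreqCoeff_mul_add_conj (IsWeberSolution.of_real hx hv)
  have h := (tendsto_complexCoord_posFreq.const_mul (posFreqCoeff (x 0) (v 0))).add
    (tendsto_complexCoord_conj_posFreq.const_mul (conj (posFreqCoeff (x 0) (v 0))))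
  rw [mul_zero, add_zero] at h
  refine h.congr fun t ↦ ?_
  rw [aInst_eq_linearCombination (z := fun t ↦ conj (posFreqSolution t))
    (u := fun t ↦ conj (posFreqVelocity t)) (hdecomp t).1 (hdecomp t).2]
  ring

lemma posFreqCoeff_zero_right (x₀ : ℝ) :
    posFreqCoeff x₀ 0 = (1 + I) * x₀ / (2 * quarticMoment 0 0) := by
  simp [posFreqCoeff]

lemma posFreqCoeff_zero_left (v₀ : ℝ) :
    posFreqCoeff 0 v₀ = I * v₀ / (2 * quarticMoment 2 0) := by
  simp [posFreqCoeff]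

lemma posFreqCoeff_mul_posFreqCoeff (x₀ v₀ : ℝ) :
    posFreqCoeff x₀ 0 * posFreqCoeff 0 v₀ = (1 + I) * I * (x₀ * v₀) / (4 * (π / √2)) := by
  rw [posFreqCoeff_zero_right, posFreqCoeff_zero_left, ← quarticMoment_zero_mul_quarticMoment_two,
    div_mul_div_comm]
  ring

lemma conj_posFreqCoeff_mul_posFreqCoeff (x₀ v₀ : ℝ) :
    conj (posFreqCoeff x₀ 0) * posFreqCoeff 0 v₀ = (1 - I) * I * (x₀ * v₀) / (4 * (π / √2)) := by
  rw [posFreqCoeff_zero_right, posFreqCoeff_zero_left, ← quarticMoment_zero_mul_quarticMoment_two]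
  simp only [map_div₀, map_mul, map_add, map_one, map_ofNat, Complex.conj_I, Complex.conj_ofReal,
    conj_quarticMoment_zero_right Even.zero]
  rw [div_mul_div_comm]
  ring

theorem tendsto_aInst_mul_aInst_mul_adiabaticPhase_sq {x v y w : ℝ → ℝ}
    (hx : ∀ t, HasDerivAt x (v t) t) (hv : ∀ t, HasDerivAt v (-(t ^ 2 * x t)) t)
    (hy : ∀ t, HasDerivAt y (w t) t) (hw : ∀ t, HasDerivAt w (-(t ^ 2 * y t)) t)
    (hv0 : v 0 = 0) (hy0 : y 0 = 0) :
    Tendsto (fun t ↦ aInst x v t * aInst y w t * adiabaticPhase t ^ 2) atTop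
      (𝓝 (√2 / 2 * I * (x 0 * w 0))) := by
  have h := (tendsto_aInst_mul_adiabaticPhase hx hv).mul (tendsto_aInst_mul_adiabaticPhase hy hw)
  have hsqrt : (√2 : ℂ) ≠ 0 := by norm_cast; positivity
  have hI : 1 + I ≠ 0 := fun h ↦ by simpa using congrArg Complex.re h
  have hlim : posFreqCoeff (x 0) 0 * posFreqAmplitude * (posFreqCoeff 0 (w 0) * posFreqAmplitude) =
      √2 / 2 * I * (x 0 * w 0) := by
    rw [mul_mul_mul_comm, posFreqCoeff_mul_posFreqCoeff, ← sq, posFreqAmplitude_sq]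
    field_simp
    norm_num
  rw [hv0, hy0, hlim] at h
  exact h.congr fun t ↦ by ring

theorem tendsto_conj_aInst_mul_aInst {x v y w : ℝ → ℝ}
    (hx : ∀ t, HasDerivAt x (v t) t) (hv : ∀ t, HasDerivAt v (-(t ^ 2 * x t)) t)
    (hy : ∀ t, HasDerivAt y (w t) t) (hw : ∀ t, HasDerivAt w (-(t ^ 2 * y t)) t)
    (hv0 : v 0 = 0) (hy0 : y 0 = 0) :
    Tendsto (fun t ↦ conj (aInst x v t) * aInst y w t) atTop
      (𝓝 ((1 + I) / 2 * (x 0 * w 0))) := by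
  have h := ((Complex.continuous_conj.tendsto _).comp
    (tendsto_aInst_mul_adiabaticPhase hx hv)).mul (tendsto_aInst_mul_adiabaticPhase hy hw)
  have hsqrt : (√2 : ℂ) ^ 2 = 2 := by exact_mod_cast Real.sq_sqrt two_pos.le
  have hlim : conj (posFreqCoeff (x 0) 0 * posFreqAmplitude) *
      (posFreqCoeff 0 (w 0) * posFreqAmplitude) = (1 + I) / 2 * (x 0 * w 0) := by
    rw [map_mul, mul_mul_mul_comm, conj_posFreqCoeff_mul_posFreqCoeff,
      conj_posFreqAmplitude_mul_self]
    field_simp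
    linear_combination 2 * (1 - I) * I * x 0 * w 0 * hsqrt - 4 * x 0 * w 0 * Complex.I_sq
  rw [hv0, hy0, hlim] at h
  refine h.congr fun t ↦ ?_
  rw [Function.comp_apply, map_mul]
  linear_combination conj (aInst x v t) * aInst y w t * conj_adiabaticPhase_mul_self t

lemma deriv_zero_of_even {E : Type*} [NormedAddCommGroup E] [NormedSpace ℝ E] {f : ℝ → E}
    (hf : f.Even) : deriv f 0 = 0 := by
  have h := deriv_comp_neg f 0
  rw [funext hf, neg_zero] at h
  have := IsAddTorsionFree.of_isTorsionFree ℝ E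
  exact self_eq_neg.mp h

end WeberAsymptotics

/-- Asymptotics of the propagator entries over `[−t, t]` for the Weber
equation: `U(t)·e^{i(t²−π/2)} → −√2·i` and `V̄(t) → i` as `t → ∞`. -/
theorem weber_propagator_asymptotics
    (xp vp xm vm : ℝ → ℝ)
    (hxp : ∀ t, HasDerivAt xp (vp t) t) (hvp : ∀ t, HasDerivAt vp (-(t ^ 2 * xp t)) t)
    (hxm : ∀ t, HasDerivAt xm (vm t) t) (hvm : ∀ t, HasDerivAt vm (-(t ^ 2 * xm t)) t)
    (heven : ∀ t, xp (-t) = xp t) (hodd : ∀ t, xm (-t) = -xm t)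
    (hW : ∀ t, xp t * vm t - vp t * xm t = 1)
    (U Vb : ℝ → ℂ)
    (hU : ∀ t, U t = -2 * Complex.I * aInst xp vp t * aInst xm vm t)
    (hV : ∀ t, Vb t =
      2 * Complex.I * ((((starRingEnd ℂ) (aInst xp vp t) * aInst xm vm t).re : ℝ) : ℂ)) :
    Tendsto (fun t : ℝ => U t * Complex.exp (Complex.I * ((t : ℂ) ^ 2 - (π : ℂ) / 2)))
      atTop (nhds (-(Real.sqrt 2 : ℂ) * Complex.I)) ∧
    Tendsto Vb atTop (nhds Complex.I) := by
  have hvp0 : vp 0 = 0 := by rw [← (hxp 0).deriv, deriv_zero_of_even heven]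
  have hxm0 : xm 0 = 0 := Function.Odd.map_zero hodd
  have hdata : (xp 0 * vm 0 : ℂ) = 1 := by exact_mod_cast (by simpa [hxm0] using hW 0)
  constructor
  · have h := (tendsto_aInst_mul_aInst_mul_adiabaticPhase_sq hxp hvp hxm hvm hvp0 hxm0).const_mul
      (-2)
    rw [hdata] at h
    convert h using 2 with t
    · rw [hU, exp_I_mul_sq_sub_pi_div_two]
      linear_combination 2 * aInst xp vp t * aInst xm vm t * adiabaticPhase t ^ 2 * Complex.I_sq
    · ring
  · have h := (Complex.continuous_ofReal.tendsto _).comp ((Complex.continuous_re.tendsto _).comp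
      (tendsto_conj_aInst_mul_aInst hxp hvp hxm hvm hvp0 hxm0))
    rw [hdata] at h
    convert h.const_mul (2 * Complex.I) using 2 with t
    · exact hV t
    · norm_num
      ring
end

section
/- Let δ ∈ ℝ. There exist twice differentiable functions x₊, x₋ : ℝ → ℝ solving ẍ(t) + (t² + δ²)x(t) = 0 for all t, with x₊ even, x₋ odd, and Wronskian x₊ẋ₋ − ẋ₊x₋ = 1, together with nonzero real constants x̂₊, x̂₋, such that with γ₊ = 1/Γ((1+iδ²)/4), γ₋ = 1/Γ((3+iδ²)/4), θ₊(t) = t²/2 + (δ²/2)·log t − π/8, and θ₋(t) = t²/2 + (δ²/2)·log t − 3π/8, one has as t → +∞: √t·x_±(t) − x̂_±·(γ_±·e^{iθ_±(t)} + conj(γ_±·e^{iθ_±(t)})) → 0 and ẋ_±(t)/√t − x̂_±·(i·γ_±·e^{iθ_±(t)} + conj(i·γ_±·e^{iθ_±(t)})) → 0. -/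
open Real Filter

/-!
Whittaker's function `D_{-ν}` is entire, so with `ν = (1 - iλ)/2` the outgoing wave
`w(t) = Γ(ν) D_{-ν}((1 - i)t)` solves `ẍ + (t² + λ)x = 0` on the whole line, and rescaling its
integral representation gives `w(t) ~ A e^{iφ(t)} / √t`, where `A = Γ(ν)(1 - i)^{-ν}` and
`φ(t) = t²/2 + (λ/2) log t`. Conservation of the Wronskian of `w` and its conjugate gives
`Im (conj w(0) · ẇ(0)) = |A|²`, so the real solutions with `(x, ẋ)(0) = (1, 0)` and `(0, 1)` are
`Re (αw)` for `α = i conj ẇ(0) / |A|²` and `α = -i conj w(0) / |A|²`. Since `w(0)` and `ẇ(0)` are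
Gamma values at `ν/2` and `(ν + 1)/2`, the duplication formula for `Γ(ν)` reduces `αA` to a positive
multiple of `e^{-iπ/8} / Γ((1 + iλ)/4)`, respectively of `e^{-3iπ/8} / Γ((3 + iλ)/4)`.
-/

section Mellin

open MeasureTheory Set
open scoped Topology

variable {f f' : ℝ → ℂ} {ν z : ℂ} {a r : ℝ}

lemma mellinConvergent_of_continuous_of_isBigO_exp (hν : 0 < ν.re) (hf : Continuous f)
    (ha : 0 < a) (htop : f =O[atTop] fun t => Real.exp (-a * t)) : MellinConvergent f ν := by
  refine mellinConvergent_of_isBigO_rpow_exp ha (hf.locallyIntegrable.locallyIntegrableOn _)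
    htop ?_ hν
  simpa only [neg_zero, Real.rpow_zero] using
    (hf.continuousAt.tendsto.mono_left nhdsWithin_le_nhds).isBigO_one ℝ

lemma tendsto_cpow_mul_of_isBigO_exp (ν : ℂ) (ha : 0 < a)
    (htop : f =O[atTop] fun t => Real.exp (-a * t)) :
    Tendsto (fun t : ℝ => (t : ℂ) ^ ν * f t) atTop (𝓝 0) := by
  have hpow : (fun t : ℝ => (t : ℂ) ^ ν) =O[atTop] fun t : ℝ => t ^ ν.re := by
    refine Asymptotics.IsBigO.of_bound' ?_
    filter_upwards [eventually_gt_atTop 0] with t ht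
    rw [Complex.norm_cpow_eq_rpow_re_of_pos ht, Real.norm_of_nonneg (Real.rpow_nonneg ht.le _)]
  exact (hpow.mul htop).trans_tendsto (tendsto_rpow_mul_exp_neg_mul_atTop_nhds_zero _ _ ha)

lemma mellin_add_one_of_hasDerivAt (hν : 0 < ν.re) (hderiv : ∀ t, HasDerivAt f (f' t) t)
    (ha : 0 < a)
    (htop : f =O[atTop] fun t => Real.exp (-a * t)) (hf' : MellinConvergent f' (ν + 1)) :
    mellin f' (ν + 1) = -(ν * mellin f ν) := by
  have hν0 : ν ≠ 0 := by rintro rfl; exact hν.false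
  have hf : Continuous f := continuous_iff_continuousAt.2 fun t => (hderiv t).continuousAt
  have hconv : MellinConvergent f ν := mellinConvergent_of_continuous_of_isBigO_exp hν hf ha htop
  have hftc := integral_Ioi_of_hasDerivAt_of_tendsto (a := 0) (m := 0)
    (f := fun t : ℝ => (t : ℂ) ^ ν * f t)
    (f' := fun t : ℝ => ν * ((t : ℂ) ^ (ν - 1) • f t) + (t : ℂ) ^ (ν + 1 - 1) • f' t)
    ((Complex.continuous_ofReal_cpow_const hν).mul hf).continuousWithinAt
    (fun t ht => ((hasDerivAt_ofReal_cpow_const (ne_of_gt ht) hν0).mul (hderiv t)).congr_deriv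
      (by simp only [smul_eq_mul, add_sub_cancel_right]; ring))
    ((hconv.const_mul ν).add hf') (tendsto_cpow_mul_of_isBigO_exp ν ha htop)
  rw [integral_add (hconv.const_mul ν) hf', integral_const_mul, Complex.ofReal_zero,
    Complex.zero_cpow hν0, zero_mul, sub_zero] at hftc
  exact eq_neg_of_add_eq_zero_right hftc

lemma aestronglyMeasurable_mellin_exp_neg_mul
    (hf : MellinConvergent (fun s => Complex.exp (-(r * s)) * f s) ν) (z : ℂ) :
    AEStronglyMeasurable (fun s : ℝ => (s : ℂ) ^ (ν - 1) • (Complex.exp (-(z * s)) * f s))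
      (volume.restrict (Ioi 0)) := by
  have hexp : Continuous fun s : ℝ => Complex.exp (-((z - r) * s)) := by fun_prop
  refine (hexp.aestronglyMeasurable.mul hf.1).congr (Eventually.of_forall fun s => ?_)
  have hsplit : Complex.exp (-(z * s)) =
      Complex.exp (-((z - r) * s)) * Complex.exp (-(r * s)) := by
    rw [← Complex.exp_add]; ring_nf
  simp only [Pi.mul_apply, smul_eq_mul, hsplit]
  ring

lemma norm_exp_neg_mul_ofReal (z : ℂ) (s : ℝ) :
    ‖Complex.exp (-(z * s))‖ = Real.exp (-(z.re * s)) := by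
  rw [Complex.norm_exp, Complex.neg_re, Complex.re_mul_ofReal]

lemma mellinConvergent_exp_neg_mul_of_le
    (hf : MellinConvergent (fun s => Complex.exp (-(r * s)) * f s) ν) (hz : r ≤ z.re) :
    MellinConvergent (fun s => Complex.exp (-(z * s)) * f s) ν := by
  refine Integrable.mono hf (aestronglyMeasurable_mellin_exp_neg_mul hf z) ?_
  filter_upwards [ae_restrict_mem measurableSet_Ioi] with s (hs : 0 < s)
  simp only [norm_smul, norm_mul, norm_exp_neg_mul_ofReal, Complex.ofReal_re]
  gcongr

lemma mul_exp_neg_mul_le_inv (s : ℝ) (ha : 0 < a) : s * Real.exp (-(a * s)) ≤ a⁻¹ := by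
  rw [Real.exp_neg, ← div_eq_mul_inv, div_le_iff₀ (Real.exp_pos _), inv_mul_eq_div, le_div_iff₀ ha]
  linarith [Real.add_one_le_exp (a * s)]

lemma norm_mul_smul_exp_neg_mul_le {m s : ℝ} (w c : ℂ) (hs : 0 ≤ s) (hrm : r < m) (hmz : m ≤ z.re) :
    ‖s * (w • (Complex.exp (-(z * s)) * c))‖ ≤
      (m - r)⁻¹ * ‖w • (Complex.exp (-(r * s)) * c)‖ := by
  have hexp : s * Real.exp (-(z.re * s)) ≤ (m - r)⁻¹ * Real.exp (-(r * s)) := calc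
    s * Real.exp (-(z.re * s)) ≤ s * Real.exp (-(m * s)) := by gcongr
    _ = s * Real.exp (-((m - r) * s)) * Real.exp (-(r * s)) := by
      rw [mul_assoc, ← Real.exp_add]; ring_nf
    _ ≤ (m - r)⁻¹ * Real.exp (-(r * s)) := by
      gcongr; exact mul_exp_neg_mul_le_inv s (sub_pos.2 hrm)
  simp only [norm_smul, norm_mul, norm_exp_neg_mul_ofReal, Complex.ofReal_re,
    Complex.norm_real, Real.norm_of_nonneg hs]
  calc s * (‖w‖ * (Real.exp (-(z.re * s)) * ‖c‖))
      = ‖w‖ * ‖c‖ * (s * Real.exp (-(z.re * s))) := by ring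
    _ ≤ ‖w‖ * ‖c‖ * ((m - r)⁻¹ * Real.exp (-(r * s))) := by gcongr
    _ = (m - r)⁻¹ * (‖w‖ * (Real.exp (-(r * s)) * ‖c‖)) := by ring

lemma hasDerivAt_mellin_exp_neg_mul
    (hf : MellinConvergent (fun s => Complex.exp (-(r * s)) * f s) ν) (hz : r < z.re) :
    HasDerivAt (fun z : ℂ => mellin (fun s : ℝ => Complex.exp (-(z * s)) * f s) ν)
      (-mellin (fun s : ℝ => Complex.exp (-(z * s)) * f s) (ν + 1)) z := by
  obtain ⟨m, hrm, hmz⟩ := exists_between hz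
  have hshift : ∀ s : ℝ, 0 < s → (s : ℂ) ^ (ν + 1 - 1) = s * (s : ℂ) ^ (ν - 1) := fun s hs => by
    have hs' : (s : ℂ) ≠ 0 := by exact_mod_cast hs.ne'
    rw [add_sub_right_comm, Complex.cpow_add _ _ hs', Complex.cpow_one, mul_comm]
  let F' : ℂ → ℝ → ℂ := fun x s =>
    -(s * ((s : ℂ) ^ (ν - 1) • (Complex.exp (-(x * s)) * f s)))
  have hderiv := hasDerivAt_integral_of_dominated_loc_of_deriv_le (F' := F')
    (bound := fun s : ℝ => (m - r)⁻¹ * ‖(s : ℂ) ^ (ν - 1) • (Complex.exp (-(r * s)) * f s)‖)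
    ((isOpen_lt continuous_const Complex.continuous_re).mem_nhds hmz)
    (Eventually.of_forall (aestronglyMeasurable_mellin_exp_neg_mul hf))
    (mellinConvergent_exp_neg_mul_of_le hf hz.le)
    (Complex.continuous_ofReal.aestronglyMeasurable.mul
      (aestronglyMeasurable_mellin_exp_neg_mul hf z)).neg
    ?_ (hf.norm.const_mul _) ?_
  · refine hderiv.2.congr_deriv ?_
    rw [mellin, ← integral_neg]
    refine setIntegral_congr_fun measurableSet_Ioi fun s hs => ?_
    simp only [F', smul_eq_mul, hshift s hs, mul_assoc]
  · filter_upwards [ae_restrict_mem measurableSet_Ioi] with s (hs : 0 < s) x (hx : m < x.re)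
    rw [norm_neg]
    exact norm_mul_smul_exp_neg_mul_le _ _ hs.le hrm hx.le
  · filter_upwards with s x _
    have hexp : HasDerivAt (fun x : ℂ => Complex.exp (-(x * s)))
        (Complex.exp (-(x * s)) * -(1 * s)) x := ((hasDerivAt_id x).mul_const _).neg.cexp
    exact ((hexp.mul_const (f s)).const_mul _).congr_deriv
      (by simp only [F', smul_eq_mul]; ring)

end Mellin

section WeberIntegral

open MeasureTheory Set
open scoped Topology

variable {p : ℝ} {ν z : ℂ}

/-- The integral `∫₀^∞ s^(ν-1) exp(-zs - ps²/2) ds`. At `p = 1` it is `Γ(ν) exp(z²/4)` times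
Whittaker's parabolic cylinder function `D_{-ν}(z)`; the parameter `p` is kept so that rescaling `z`
amounts to letting `p` tend to `0`, where the integral is Euler's. -/
noncomputable def weberIntegral (p : ℝ) (ν z : ℂ) : ℂ :=
  mellin (fun s : ℝ => Complex.exp (-(z * s)) * Complex.exp (-(p * s ^ 2 / 2))) ν

lemma norm_exp_neg_mul_sq_div_two (p s : ℝ) :
    ‖Complex.exp (-(p * s ^ 2 / 2))‖ = Real.exp (-(p * s ^ 2 / 2)) := by
  rw [← Complex.norm_exp_ofReal]; push_cast; rfl

lemma weberKernel_isBigO_exp (hp : 0 ≤ p) (hpz : 0 < p ∨ 0 < z.re) :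
    ∃ a : ℝ, 0 < a ∧ (fun s : ℝ => Complex.exp (-(z * s)) * Complex.exp (-(p * s ^ 2 / 2)))
      =O[atTop] fun s => Real.exp (-a * s) := by
  suffices h : ∃ a : ℝ, 0 < a ∧ ∀ᶠ s : ℝ in atTop, a * s ≤ z.re * s + p * s ^ 2 / 2 by
    obtain ⟨a, ha, hle⟩ := h
    refine ⟨a, ha, .of_bound' ?_⟩
    filter_upwards [hle] with s hs
    rw [norm_mul, norm_exp_neg_mul_ofReal, norm_exp_neg_mul_sq_div_two, ← Real.exp_add,
      Real.norm_of_nonneg (Real.exp_nonneg _), Real.exp_le_exp]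
    linarith
  rcases hpz with hp' | hz
  · refine ⟨1, one_pos, ?_⟩
    filter_upwards [eventually_ge_atTop 0, eventually_ge_atTop (2 * (1 - z.re) / p)] with s hs0 hs
    rw [div_le_iff₀ hp'] at hs
    nlinarith
  · refine ⟨z.re, hz, Eventually.of_forall fun s => ?_⟩
    have : 0 ≤ p * s ^ 2 / 2 := by positivity
    linarith

lemma mellinConvergent_weberKernel (hp : 0 ≤ p) (hpz : 0 < p ∨ 0 < z.re) (hν : 0 < ν.re) :
    MellinConvergent
      (fun s : ℝ => Complex.exp (-(z * s)) * Complex.exp (-(p * s ^ 2 / 2))) ν := by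
  obtain ⟨a, ha, hO⟩ := weberKernel_isBigO_exp hp hpz
  exact mellinConvergent_of_continuous_of_isBigO_exp hν (by fun_prop) ha hO

lemma hasDerivAt_weberIntegral (hp : 0 ≤ p) (hpz : 0 < p ∨ 0 < z.re) (hν : 0 < ν.re) :
    HasDerivAt (weberIntegral p ν) (-weberIntegral p (ν + 1) z) z := by
  obtain ⟨r, hrz, hpr⟩ : ∃ r < z.re, 0 < p ∨ 0 < r := by
    rcases hpz with hp' | hz
    · exact ⟨z.re - 1, by linarith, .inl hp'⟩
    · exact ⟨z.re / 2, by linarith, .inr (by linarith)⟩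
  exact hasDerivAt_mellin_exp_neg_mul
    (mellinConvergent_weberKernel (z := r) hp (by simpa using hpr) hν) hrz

lemma weberIntegral_recurrence (hp : 0 ≤ p) (hpz : 0 < p ∨ 0 < z.re) (hν : 0 < ν.re) :
    z * weberIntegral p (ν + 1) z + p * weberIntegral p (ν + 2) z = ν * weberIntegral p ν z := by
  let f : ℝ → ℂ := fun s => Complex.exp (-(z * s)) * Complex.exp (-(p * s ^ 2 / 2))
  have hf₁ : MellinConvergent f (ν + 1) :=
    mellinConvergent_weberKernel hp hpz (by rw [Complex.add_re, Complex.one_re]; linarith)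
  have hf₂ : MellinConvergent f (ν + 1 + 1) :=
    mellinConvergent_weberKernel hp hpz (by simp only [Complex.add_re, Complex.one_re]; linarith)
  have hmul : MellinConvergent (fun s : ℝ => (s : ℂ) ^ (1 : ℂ) • f s) (ν + 1) :=
    MellinConvergent.cpow_smul.2 hf₂
  have hderiv : ∀ s : ℝ, HasDerivAt f (-z • f s + -(p : ℂ) • ((s : ℂ) ^ (1 : ℂ) • f s)) s := by
    intro s
    have hlin : HasDerivAt (fun x : ℂ => Complex.exp (-(z * x)))
        (Complex.exp (-(z * s)) * -(z * 1)) s := ((hasDerivAt_id' _).const_mul z).neg.cexp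
    have hquad : HasDerivAt (fun x : ℂ => Complex.exp (-(p * x ^ 2 / 2)))
        (Complex.exp (-(p * s ^ 2 / 2)) * -(p * (2 * s) / 2)) s := by
      simpa using (((hasDerivAt_pow 2 (s : ℂ)).const_mul (p : ℂ)).div_const 2).neg.cexp
    refine (hlin.mul hquad).comp_ofReal.congr_deriv ?_
    simp only [f, Complex.cpow_one, smul_eq_mul]
    ring
  obtain ⟨a, ha, hO⟩ := weberKernel_isBigO_exp hp hpz
  have hsum := hasMellin_add (hf₁.const_smul (-z)) (hmul.const_smul (-(p : ℂ)))
  have hparts := mellin_add_one_of_hasDerivAt hν hderiv ha hO hsum.1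
  rw [hsum.2, mellin_const_smul, mellin_const_smul, mellin_cpow_smul, smul_eq_mul,
    smul_eq_mul] at hparts
  rw [← one_add_one_eq_two, ← add_assoc]
  change z * mellin f (ν + 1) + p * mellin f (ν + 1 + 1) = ν * mellin f ν
  linear_combination -hparts

lemma weberIntegral_zero_left (hν : 0 < ν.re) (hz : 0 < z.re) :
    weberIntegral 0 ν z = Complex.Gamma ν * z ^ (-ν) := by
  have hne : ∀ {x : ℂ}, 0 < x.re → x ≠ 0 := by rintro _ hx rfl; exact hx.false
  have hpow : ∀ x : ℂ, 0 < x.re →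
      HasDerivAt (fun x : ℂ => x ^ ν) (ν * x ^ (ν - 1)) x := fun x hx => by
    simpa using (hasDerivAt_id x).cpow_const (.inl hx)
  have hderiv : ∀ x ∈ {x : ℂ | 0 < x.re},
      HasDerivAt (fun x => x ^ ν * weberIntegral 0 ν x) 0 x := fun x hx => by
    have hrec := weberIntegral_recurrence le_rfl (.inr hx) hν
    refine ((hpow x hx).mul (hasDerivAt_weberIntegral le_rfl (.inr hx) hν)).congr_deriv ?_
    have hsub : x ^ ν = x * x ^ (ν - 1) := by
      rw [Complex.cpow_sub _ _ (hne hx), Complex.cpow_one, mul_div_cancel₀ _ (hne hx)]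
    rw [Complex.ofReal_zero, zero_mul, add_zero] at hrec
    rw [hsub]
    linear_combination -x ^ (ν - 1) * hrec
  have hconst : z ^ ν * weberIntegral 0 ν z = 1 ^ ν * weberIntegral 0 ν 1 := by
    refine (isOpen_lt continuous_const Complex.continuous_re).is_const_of_deriv_eq_zero
      (convex_halfSpace_re_gt 0).isPreconnected
      (fun x hx => (hderiv x hx).differentiableAt.differentiableWithinAt)
      (fun x hx => (hderiv x hx).deriv) hz ?_
    simp
  have hone : weberIntegral 0 ν 1 = Complex.Gamma ν := by
    rw [Complex.Gamma_eq_integral hν, Complex.GammaIntegral_eq_mellin]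
    simp [weberIntegral]
  rw [Complex.one_cpow, one_mul, hone] at hconst
  rw [← hconst, Complex.cpow_neg, mul_right_comm, mul_inv_cancel₀, one_mul]
  exact (Complex.cpow_ne_zero_iff_of_exponent_ne_zero (hne hν)).2 (hne hz)

lemma weberIntegral_zero_right (hp : 0 < p) (hν : 0 < ν.re) :
    weberIntegral p ν 0 = Complex.Gamma (ν / 2) * (p / 2 : ℂ) ^ (-(ν / 2)) / 2 := by
  have hν' : 0 < (ν / 2).re := by rw [Complex.div_ofNat_re]; linarith
  have hp' : 0 < (p / 2 : ℂ).re := by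
    rw [Complex.div_ofNat_re, Complex.ofReal_re]; linarith
  let f : ℝ → ℂ := fun u => Complex.exp (-(p / 2 * u)) * Complex.exp (-((0 : ℝ) * u ^ 2 / 2))
  calc weberIntegral p ν 0 = mellin (fun s => f (s ^ (2 : ℝ))) ν := by
        rw [weberIntegral]
        congr 1 with s
        simp only [f, zero_mul, neg_zero, Complex.exp_zero, one_mul, Complex.ofReal_zero, zero_div,
          mul_one, Real.rpow_two, Complex.ofReal_pow]
        ring_nf
    _ = |(2 : ℝ)|⁻¹ • mellin f (ν / (2 : ℝ)) := mellin_comp_rpow f ν 2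
    _ = Complex.Gamma (ν / 2) * (p / 2 : ℂ) ^ (-(ν / 2)) / 2 := by
        rw [← weberIntegral_zero_left hν' hp', abs_of_pos two_pos, Complex.real_smul,
          Complex.ofReal_inv, Complex.ofReal_ofNat, inv_mul_eq_div]
        rfl

lemma weberIntegral_mul_sq_mul (p : ℝ) (ν z : ℂ) {t : ℝ} (ht : 0 < t) :
    weberIntegral (p * t ^ 2) ν (z * t) = (t : ℂ) ^ (-ν) * weberIntegral p ν z := by
  refine Eq.trans ?_ (mellin_comp_mul_left _ _ ht)
  rw [weberIntegral]
  congr 1 with s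
  push_cast
  ring_nf

lemma continuousWithinAt_weberIntegral_zero_left (hν : 0 < ν.re) (hz : 0 < z.re) :
    ContinuousWithinAt (fun p => weberIntegral p ν z) (Ici 0) 0 := by
  refine continuousWithinAt_of_dominated
    (bound := fun s : ℝ => ‖(s : ℂ) ^ (ν - 1) • (Complex.exp (-(z * s)) *
      Complex.exp (-((0 : ℝ) * s ^ 2 / 2)))‖) ?_ ?_
    (mellinConvergent_weberKernel le_rfl (.inr hz) hν).norm ?_
  · filter_upwards [self_mem_nhdsWithin] with p hp
    exact (mellinConvergent_weberKernel hp (.inr hz) hν).1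
  · filter_upwards [self_mem_nhdsWithin] with p (hp : 0 ≤ p)
    refine Eventually.of_forall fun s => ?_
    simp only [norm_smul, norm_mul, norm_exp_neg_mul_sq_div_two, zero_mul]
    gcongr
    positivity
  · exact Eventually.of_forall fun s => by fun_prop

lemma tendsto_cpow_mul_weberIntegral (hν : 0 < ν.re) (hz : 0 < z.re) :
    Tendsto (fun t : ℝ => (t : ℂ) ^ ν * weberIntegral 1 ν (z * t)) atTop
      (𝓝 (Complex.Gamma ν * z ^ (-ν))) := by
  rw [← weberIntegral_zero_left hν hz]
  have hinv : Tendsto (fun t : ℝ => (t ^ 2)⁻¹) atTop (𝓝[≥] 0) :=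
    tendsto_nhdsWithin_iff.2 ⟨(tendsto_pow_atTop two_ne_zero).inv_tendsto_atTop,
      Eventually.of_forall fun t => inv_nonneg.2 (sq_nonneg t)⟩
  refine ((continuousWithinAt_weberIntegral_zero_left hν hz).tendsto.comp hinv).congr' ?_
  filter_upwards [eventually_gt_atTop 0] with t ht
  have hscale := weberIntegral_mul_sq_mul (t ^ 2)⁻¹ ν z ht
  have ht' : (t : ℂ) ≠ 0 := by exact_mod_cast ht.ne'
  rw [inv_mul_cancel₀ (pow_ne_zero 2 ht.ne')] at hscale
  rw [Function.comp_apply, hscale, ← mul_assoc, ← Complex.cpow_add _ _ ht', add_neg_cancel,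
    Complex.cpow_zero, one_mul]

end WeberIntegral

section ParabolicCylinder

variable {ν z : ℂ}

/-- The entire function `Γ(ν) D_{-ν}(z)`, where `D` is Whittaker's parabolic cylinder function. -/
noncomputable def weberFunction (ν z : ℂ) : ℂ :=
  Complex.exp (-(z ^ 2 / 4)) * weberIntegral 1 ν z

lemma weberFunction_recurrence (hν : 0 < ν.re) :
    z * weberFunction (ν + 1) z + weberFunction (ν + 2) z = ν * weberFunction ν z := by
  have hrec := weberIntegral_recurrence (z := z) zero_le_one (.inl one_pos) hν
  rw [Complex.ofReal_one, one_mul] at hrec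
  simp only [weberFunction]
  linear_combination Complex.exp (-(z ^ 2 / 4)) * hrec

lemma hasDerivAt_weberFunction (hν : 0 < ν.re) :
    HasDerivAt (weberFunction ν) (-(weberFunction (ν + 1) z + z / 2 * weberFunction ν z)) z := by
  have hexp : HasDerivAt (fun z : ℂ => Complex.exp (-(z ^ 2 / 4)))
      (Complex.exp (-(z ^ 2 / 4)) * -(2 * z / 4)) z := by
    simpa using ((hasDerivAt_pow 2 z).div_const 4).neg.cexp
  refine (hexp.mul (hasDerivAt_weberIntegral zero_le_one (.inl one_pos) hν)).congr_deriv ?_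
  simp only [weberFunction]
  ring

lemma hasDerivAt_deriv_weberFunction (hν : 0 < ν.re) :
    HasDerivAt (fun z => -(weberFunction (ν + 1) z + z / 2 * weberFunction ν z))
      ((z ^ 2 / 4 + ν - 1 / 2) * weberFunction ν z) z := by
  have hν' : 0 < (ν + 1).re := by rw [Complex.add_re, Complex.one_re]; linarith
  refine ((hasDerivAt_weberFunction hν').add
    (((hasDerivAt_id z).div_const 2).mul (hasDerivAt_weberFunction hν))).neg.congr_deriv ?_
  have hrec := weberFunction_recurrence (z := z) hν
  rw [add_assoc, one_add_one_eq_two, id]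
  linear_combination hrec

end ParabolicCylinder

section Oscillator

open scoped ComplexConjugate

variable {E F : Type*} [NormedAddCommGroup E] [NormedSpace ℝ E] [NormedAddCommGroup F]
  [NormedSpace ℝ F] {q : ℝ → ℝ}

/-- `x` solves the oscillator equation `ẍ + q(t) x = 0` on `ℝ`, with velocity `v = ẋ`. The velocity
is part of the data so that the equation is first order in the pair `(x, v)`. -/
structure IsOscillatorSolution (q : ℝ → ℝ) (x v : ℝ → E) : Prop where
  hasDerivAt : ∀ t, HasDerivAt x (v t) t
  hasDerivAt_velocity : ∀ t, HasDerivAt v (-(q t • x t)) t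

namespace IsOscillatorSolution

lemma clm_apply {x v : ℝ → E} (h : IsOscillatorSolution q x v) (L : E →L[ℝ] F) :
    IsOscillatorSolution q (fun t => L (x t)) (fun t => L (v t)) where
  hasDerivAt t := L.hasFDerivAt.comp_hasDerivAt t (h.hasDerivAt t)
  hasDerivAt_velocity t := by
    simpa only [map_neg, map_smul] using! L.hasFDerivAt.comp_hasDerivAt t (h.hasDerivAt_velocity t)

lemma comp_neg {x v : ℝ → E} (h : IsOscillatorSolution q x v) (hq : ∀ t, q (-t) = q t) :
    IsOscillatorSolution q (fun t => x (-t)) (fun t => -v (-t)) where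
  hasDerivAt t := by
    simpa only [Function.comp_def, neg_smul, one_smul] using!
      (h.hasDerivAt (-t)).scomp t (hasDerivAt_neg t)
  hasDerivAt_velocity t := by
    simpa only [Function.comp_def, neg_smul, one_smul, neg_neg, hq] using!
      ((h.hasDerivAt_velocity (-t)).scomp t (hasDerivAt_neg t)).neg

lemma wronskian_eq {A : Type*} [NormedRing A] [NormedAlgebra ℝ A] {x v y u : ℝ → A}
    (hx : IsOscillatorSolution q x v) (hy : IsOscillatorSolution q y u) (t : ℝ) :
    x t * u t - v t * y t = x 0 * u 0 - v 0 * y 0 := by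
  have hderiv : ∀ t, HasDerivAt (fun t => x t * u t - v t * y t) 0 t := fun t => by
    refine (((hx.hasDerivAt t).mul (hy.hasDerivAt_velocity t)).sub
      ((hx.hasDerivAt_velocity t).mul (hy.hasDerivAt t))).congr_deriv ?_
    simp only [mul_neg, neg_mul, mul_smul_comm, smul_mul_assoc]
    abel
  exact is_const_of_deriv_eq_zero (fun t => (hderiv t).differentiableAt)
    (fun t => (hderiv t).deriv) t 0

variable {A : Type*} [NormedCommRing A] [NormedAlgebra ℝ A] {x v y u z w : ℝ → A}

lemma eq_sub_of_wronskian_eq_one (hx : IsOscillatorSolution q x v)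
    (hy : IsOscillatorSolution q y u) (hz : IsOscillatorSolution q z w)
    (hxy : x 0 * u 0 - v 0 * y 0 = 1) (t : ℝ) :
    z t = (z 0 * u 0 - w 0 * y 0) * x t - (z 0 * v 0 - w 0 * x 0) * y t := by
  rw [← hz.wronskian_eq hx t, ← hz.wronskian_eq hy t]
  linear_combination -z t * ((hx.wronskian_eq hy t).trans hxy)

lemma even_of_initial (hx : IsOscillatorSolution q x v) (hy : IsOscillatorSolution q y u)
    (hq : ∀ t, q (-t) = q t) (hx0 : x 0 = 1) (hv0 : v 0 = 0) (hu0 : u 0 = 1) (t : ℝ) :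
    x (-t) = x t := by
  simpa [hx0, hv0, hu0] using
    hx.eq_sub_of_wronskian_eq_one hy (hx.comp_neg hq) (by simp [hx0, hv0, hu0]) t

lemma odd_of_initial (hx : IsOscillatorSolution q x v) (hy : IsOscillatorSolution q y u)
    (hq : ∀ t, q (-t) = q t) (hx0 : x 0 = 1) (hy0 : y 0 = 0) (hu0 : u 0 = 1) (t : ℝ) :
    y (-t) = -y t := by
  simpa [hx0, hy0, hu0] using
    hx.eq_sub_of_wronskian_eq_one hy (hy.comp_neg hq) (by simp [hx0, hy0, hu0]) t

lemma re_mul {x v : ℝ → ℂ} (h : IsOscillatorSolution q x v) (c : ℂ) :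
    IsOscillatorSolution q (fun t => (c * x t).re) (fun t => (c * v t).re) :=
  h.clm_apply (Complex.reCLM ∘L ContinuousLinearMap.mul ℝ ℂ c)

lemma im_conj_mul_eq {x v : ℝ → ℂ} (h : IsOscillatorSolution q x v) (t : ℝ) :
    (conj (x t) * v t).im = (conj (x 0) * v 0).im := by
  have hre := h.clm_apply Complex.reCLM
  have him := h.clm_apply Complex.imCLM
  have hW := hre.wronskian_eq him t
  simp only [Complex.reCLM_apply, Complex.imCLM_apply] at hW
  simp only [Complex.mul_im, Complex.conj_re, Complex.conj_im]
  linear_combination hW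

end IsOscillatorSolution

end Oscillator

section WKB

open scoped Topology ComplexConjugate
open Complex (I)

variable {q φ : ℝ → ℝ} {x v : ℝ → ℂ} {A : ℂ}

/-- `x(t) ~ A e^{iφ(t)} / √t` and `v(t) ~ i A √t e^{iφ(t)}` as `t → ∞`: the WKB form with amplitude
`A` of a solution, and its velocity, of an oscillator of frequency asymptotic to `t`. -/
structure HasWKBAmplitude (φ : ℝ → ℝ) (x v : ℝ → ℂ) (A : ℂ) : Prop where
  tendsto : Tendsto (fun t => Complex.exp (-(I * φ t)) * (√t * x t)) atTop (𝓝 A)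
  tendsto_velocity :
    Tendsto (fun t => Complex.exp (-(I * φ t)) * (v t / √t)) atTop (𝓝 (I * A))

lemma HasWKBAmplitude.const_mul (h : HasWKBAmplitude φ x v A) (c : ℂ) :
    HasWKBAmplitude φ (fun t => c * x t) (fun t => c * v t) (c * A) where
  tendsto := (h.tendsto.const_mul c).congr fun t => by ring
  tendsto_velocity := by
    rw [mul_left_comm]
    exact (h.tendsto_velocity.const_mul c).congr fun t => by ring

lemma conj_exp_neg_I_mul_mul_exp_neg_I_mul (r : ℝ) :
    conj (Complex.exp (-(I * r))) * Complex.exp (-(I * r)) = 1 := by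
  rw [← Complex.exp_conj, ← Complex.exp_add]
  simp

lemma HasWKBAmplitude.im_conj_mul (h : HasWKBAmplitude φ x v A)
    (hx : IsOscillatorSolution q x v) : (conj (x 0) * v 0).im = Complex.normSq A := by
  have hlim := (Complex.continuous_im.tendsto _).comp
    (((Complex.continuous_conj.tendsto _).comp h.tendsto).mul h.tendsto_velocity)
  have hA : (conj A * (I * A)).im = Complex.normSq A := by
    rw [mul_left_comm, ← Complex.normSq_eq_conj_mul_self, Complex.I_mul_im, Complex.ofReal_re]
  rw [hA] at hlim
  refine tendsto_nhds_unique (tendsto_const_nhds.congr' ?_) hlim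
  filter_upwards [eventually_gt_atTop 0] with t ht
  have hsqrt : (√t : ℂ) ≠ 0 := by exact_mod_cast (Real.sqrt_pos.2 ht).ne'
  rw [← hx.im_conj_mul_eq t]
  simp only [Function.comp_apply, map_mul, Complex.conj_ofReal]
  congr 1
  field_simp
  linear_combination -conj (x t) * v t * conj_exp_neg_I_mul_mul_exp_neg_I_mul (φ t)

lemma tendsto_re_sub_of_amplitude {g : ℝ → ℂ} {c β : ℝ} {γ : ℂ}
    (h : Tendsto (fun t => Complex.exp (-(I * φ t)) * g t) atTop
      (𝓝 (2 * c * (γ * Complex.exp (-(I * β)))))) :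
    Tendsto (fun t => ((g t).re : ℂ) - c * (γ * Complex.exp (I * (φ t - β : ℝ))
      + conj (γ * Complex.exp (I * (φ t - β : ℝ))))) atTop (𝓝 0) := by
  have hdiff : Tendsto (fun t => g t - 2 * c * (γ * Complex.exp (I * (φ t - β : ℝ)))) atTop
      (𝓝 0) := by
    rw [tendsto_zero_iff_norm_tendsto_zero]
    refine (tendsto_iff_norm_sub_tendsto_zero.1 h).congr fun t => ?_
    have hsplit : Complex.exp (-(I * φ t)) * (g t - 2 * c * (γ * Complex.exp (I * (φ t - β : ℝ)))) =
        Complex.exp (-(I * φ t)) * g t - 2 * c * (γ * Complex.exp (-(I * β))) := by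
      have hexp : Complex.exp (-(I * φ t)) * Complex.exp (I * (φ t - β : ℝ)) =
          Complex.exp (-(I * β)) := by
        rw [← Complex.exp_add]; push_cast; ring_nf
      linear_combination -2 * c * γ * hexp
    rw [← hsplit, norm_mul, Complex.norm_exp]
    simp
  have hre := ((Complex.continuous_ofReal.comp Complex.continuous_re).tendsto 0).comp hdiff
  rw [Function.comp_apply, Complex.zero_re, Complex.ofReal_zero] at hre
  refine hre.congr fun t => ?_
  simp only [Function.comp_apply, Complex.re_eq_add_conj, map_sub, map_mul, Complex.conj_ofReal,
    map_ofNat]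
  ring

lemma HasWKBAmplitude.tendsto_re_sub {c β : ℝ} {γ : ℂ}
    (h : HasWKBAmplitude φ x v (2 * c * (γ * Complex.exp (-(I * β))))) :
    Tendsto (fun t => ((√t * (x t).re : ℝ) : ℂ) - c * (γ * Complex.exp (I * (φ t - β : ℝ))
      + conj (γ * Complex.exp (I * (φ t - β : ℝ))))) atTop (𝓝 0) := by
  simpa only [Complex.re_ofReal_mul] using tendsto_re_sub_of_amplitude h.tendsto

lemma HasWKBAmplitude.tendsto_re_velocity_sub {c β : ℝ} {γ : ℂ}
    (h : HasWKBAmplitude φ x v (2 * c * (γ * Complex.exp (-(I * β))))) :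
    Tendsto (fun t => (((v t).re / √t : ℝ) : ℂ) - c * (I * γ * Complex.exp (I * (φ t - β : ℝ))
      + conj (I * γ * Complex.exp (I * (φ t - β : ℝ))))) atTop (𝓝 0) := by
  have hlim := h.tendsto_velocity
  rw [mul_left_comm, ← mul_assoc I] at hlim
  simpa only [Complex.div_ofReal_re] using tendsto_re_sub_of_amplitude hlim

end WKB

section Amplitudes

open scoped ComplexConjugate
open Complex (I)

variable {μ ν : ℂ}

lemma weberFunction_zero_right (hν : 0 < ν.re) :
    weberFunction ν 0 = Complex.Gamma (ν / 2) * 2 ^ (ν / 2) / 2 := by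
  have harg : (2 : ℂ).arg ≠ π := by
    rw [← Complex.ofReal_ofNat, Complex.arg_ofReal_of_nonneg zero_le_two]; exact pi_ne_zero.symm
  rw [weberFunction, weberIntegral_zero_right one_pos hν, Complex.ofReal_one, one_div,
    Complex.inv_cpow _ _ harg, Complex.cpow_neg, inv_inv, zero_pow two_ne_zero, zero_div, neg_zero,
    Complex.exp_zero, one_mul]

lemma weberFunction_zero_ne_zero (hν : 0 < ν.re) : weberFunction ν 0 ≠ 0 := by
  have hν' : 0 < (ν / 2).re := by rw [Complex.div_ofNat_re]; positivity
  rw [weberFunction_zero_right hν]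
  exact div_ne_zero (mul_ne_zero (Complex.Gamma_ne_zero_of_re_pos hν')
    fun h => two_ne_zero ((Complex.cpow_eq_zero_iff _ _).1 h).1) two_ne_zero

lemma weberFunction_zero_mul_weberFunction_add_one_zero (hν : 0 < ν.re) :
    weberFunction ν 0 * weberFunction (ν + 1) 0 = √(π / 2) * Complex.Gamma ν := by
  have hν' : 0 < (ν + 1).re := by rw [Complex.add_re, Complex.one_re]; linarith
  have hdup := Complex.Gamma_mul_Gamma_add_half (ν / 2)
  rw [mul_div_cancel₀ ν two_ne_zero, ← add_div] at hdup
  have hsqrt : (2 : ℂ) ^ (1 / 2 : ℂ) = √2 := by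
    rw [Real.sqrt_eq_rpow, Complex.ofReal_cpow zero_le_two]; norm_num
  have hpow : (2 : ℂ) ^ (ν / 2) * 2 ^ ((ν + 1) / 2) * 2 ^ (1 - ν) = 2 * √2 := by
    rw [← Complex.cpow_add _ _ two_ne_zero, ← Complex.cpow_add _ _ two_ne_zero, ← hsqrt,
      show ν / 2 + (ν + 1) / 2 + (1 - ν) = 1 + 1 / 2 by ring, Complex.cpow_add _ _ two_ne_zero,
      Complex.cpow_one]
  have hpi : (√2 : ℂ) * √π = 2 * √(π / 2) := by
    rw [← Complex.ofReal_mul, ← Real.sqrt_mul zero_le_two,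
      show 2 * π = 2 ^ 2 * (π / 2) by ring, Real.sqrt_mul (by positivity),
      Real.sqrt_sq zero_le_two, Complex.ofReal_mul, Complex.ofReal_ofNat]
  rw [weberFunction_zero_right hν, weberFunction_zero_right hν']
  linear_combination (2 : ℂ) ^ (ν / 2) * 2 ^ ((ν + 1) / 2) / 4 * hdup +
    Complex.Gamma ν * √π / 4 * hpow + Complex.Gamma ν / 2 * hpi

lemma one_sub_I_eq_sqrt_two_mul_exp : 1 - I = √2 * Complex.exp ((-(π / 4) : ℝ) * I) := by
  have hsq : (√2 : ℂ) * √2 = 2 := by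
    rw [← Complex.ofReal_mul, Real.mul_self_sqrt zero_le_two, Complex.ofReal_ofNat]
  rw [Complex.exp_mul_I, ← Complex.ofReal_cos, ← Complex.ofReal_sin, Real.cos_neg, Real.sin_neg,
    Real.cos_pi_div_four, Real.sin_pi_div_four]
  push_cast
  linear_combination (I - 1) / 2 * hsq

lemma log_one_sub_I : Complex.log (1 - I) = Real.log 2 / 2 - π / 4 * I := by
  rw [one_sub_I_eq_sqrt_two_mul_exp, Complex.log_ofReal_mul (by positivity) (Complex.exp_ne_zero _),
    Complex.log_exp, Real.log_sqrt zero_le_two]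
  · push_cast; ring
  · rw [Complex.mul_I_im, Complex.ofReal_re]; linarith [pi_pos]
  · rw [Complex.mul_I_im, Complex.ofReal_re]; linarith [pi_pos]

lemma one_sub_I_ne_zero : 1 - I ≠ 0 := fun h => by simpa using congrArg Complex.re h

lemma weberFunction_zero_mul_one_sub_I_cpow (hμ : 0 < μ.re) :
    weberFunction μ 0 * (1 - I) ^ (-μ) =
      Complex.Gamma (μ / 2) / 2 * Complex.exp (I * (π / 4) * μ) := by
  have hexp : (2 : ℂ) ^ (μ / 2) * (1 - I) ^ (-μ) = Complex.exp (I * (π / 4) * μ) := by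
    rw [Complex.cpow_def_of_ne_zero two_ne_zero, Complex.cpow_def_of_ne_zero one_sub_I_ne_zero,
      log_one_sub_I, ← Complex.exp_add, Complex.ofReal_log zero_le_two, Complex.ofReal_ofNat]
    ring_nf
  rw [weberFunction_zero_right hμ, ← hexp]
  ring

lemma Gamma_conj_eq_normSq_mul (hμ : 0 < μ.re) :
    Complex.Gamma (conj μ) = Complex.normSq (Complex.Gamma μ) * (1 / Complex.Gamma μ) := by
  rw [Complex.Gamma_conj, Complex.normSq_eq_conj_mul_self, mul_assoc,
    mul_one_div_cancel (Complex.Gamma_ne_zero_of_re_pos hμ), mul_one]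

lemma exists_weberFunction_zero_mul_one_sub_I_cpow_eq (hμ : 0 < μ.re) :
    ∃ c : ℝ, 0 < c ∧ weberFunction μ 0 * (1 - I) ^ (-μ) =
      c * (1 / Complex.Gamma (conj μ / 2) * Complex.exp (I * (π / 4 * μ.re : ℝ))) := by
  have hconj : conj (conj μ / 2) = μ / 2 := by rw [map_div₀, Complex.conj_conj, map_ofNat]
  have hre : 0 < (conj μ / 2).re := by
    rw [Complex.div_ofNat_re, Complex.conj_re]; positivity
  have hexp : Complex.exp (I * (π / 4) * μ) =
      Real.exp (-(π / 4 * μ.im)) * Complex.exp (I * (π / 4 * μ.re : ℝ)) := by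
    rw [Complex.ofReal_exp, ← Complex.exp_add]
    congr 1
    push_cast
    linear_combination -I * (π / 4) * Complex.re_add_im μ + π / 4 * μ.im * Complex.I_sq
  refine ⟨Complex.normSq (Complex.Gamma (conj μ / 2)) / 2 * Real.exp (-(π / 4 * μ.im)),
    mul_pos (half_pos (Complex.normSq_pos.2 (Complex.Gamma_ne_zero_of_re_pos hre)))
      (Real.exp_pos _), ?_⟩
  rw [weberFunction_zero_mul_one_sub_I_cpow hμ, ← hconj, Gamma_conj_eq_normSq_mul hre, hexp]
  push_cast
  ring

end Amplitudes

section WeberWave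

open scoped Topology ComplexConjugate
open Complex (I)

/-- The order `ν` for which `t ↦ D_{-ν}((1 - i)t)` solves `ẍ + (t² + lam) x = 0`. -/
noncomputable def weberOrder (lam : ℝ) : ℂ := (1 - I * lam) / 2

/-- The solution `Γ(ν) D_{-ν}((1 - i)t)` of `ẍ + (t² + lam) x = 0`. Since `1 - i` lies in the right
half-plane, it is the purely outgoing wave at `+∞`. -/
noncomputable def weberWave (lam t : ℝ) : ℂ := weberFunction (weberOrder lam) ((1 - I) * t)

/-- The time derivative of `weberWave`, in closed form. -/
noncomputable def weberWaveVelocity (lam t : ℝ) : ℂ :=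
  -(weberFunction (weberOrder lam + 1) ((1 - I) * t) +
    (1 - I) * t / 2 * weberFunction (weberOrder lam) ((1 - I) * t)) * (1 - I)

/-- The large-time expansion of the WKB phase `∫ √(t² + lam) dt`, up to a constant. -/
noncomputable def weberPhase (lam t : ℝ) : ℝ := t ^ 2 / 2 + lam / 2 * Real.log t

/-- The coefficient of the outgoing wave `e^{iφ(t)} / √t` in `weberWave`. -/
noncomputable def weberAmplitude (lam : ℝ) : ℂ :=
  Complex.Gamma (weberOrder lam) * (1 - I) ^ (-weberOrder lam)

lemma weberOrder_re (lam : ℝ) : (weberOrder lam).re = 1 / 2 := by simp [weberOrder]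

lemma weberOrder_re_pos (lam : ℝ) : 0 < (weberOrder lam).re := by
  rw [weberOrder_re]; exact one_half_pos

lemma weberOrder_add_one_re (lam : ℝ) : (weberOrder lam + 1).re = 3 / 2 := by
  rw [Complex.add_re, weberOrder_re, Complex.one_re]; norm_num

lemma weberOrder_add_one_re_pos (lam : ℝ) : 0 < (weberOrder lam + 1).re := by
  rw [weberOrder_add_one_re]; norm_num

lemma one_sub_I_sq : (1 - I) ^ 2 = -(2 * I) := by linear_combination Complex.I_sq

lemma isOscillatorSolution_weberWave (lam : ℝ) :
    IsOscillatorSolution (fun t => t ^ 2 + lam) (weberWave lam) (weberWaveVelocity lam) where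
  hasDerivAt t := by
    have hlin : HasDerivAt (fun z : ℂ => (1 - I) * z) (1 - I) t := hasDerivAt_const_mul _
    exact (HasDerivAt.comp (t : ℂ) (hasDerivAt_weberFunction (weberOrder_re_pos lam))
      hlin).comp_ofReal
  hasDerivAt_velocity t := by
    have hlin : HasDerivAt (fun z : ℂ => (1 - I) * z) (1 - I) t := hasDerivAt_const_mul _
    refine ((HasDerivAt.comp (t : ℂ) (hasDerivAt_deriv_weberFunction (weberOrder_re_pos lam))
      hlin).mul_const (1 - I)).comp_ofReal.congr_deriv ?_
    rw [weberWave, Complex.real_smul]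
    generalize weberFunction _ _ = y
    rw [weberOrder]
    push_cast
    linear_combination ((((1 - I) ^ 2 - 2 * I) * t ^ 2 / 4 - I * lam / 2) * y) * one_sub_I_sq +
      (t ^ 2 + lam) * y * Complex.I_sq

lemma cpow_weberOrder (lam : ℝ) {t : ℝ} (ht : 0 < t) :
    (t : ℂ) ^ weberOrder lam = √t * Complex.exp (-(I * (lam / 2 * Real.log t : ℝ))) := by
  rw [Real.sqrt_eq_rpow, Real.rpow_def_of_pos ht, Complex.ofReal_exp, ← Complex.exp_add,
    Complex.cpow_def_of_ne_zero (by exact_mod_cast ht.ne'), ← Complex.ofReal_log ht.le, weberOrder]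
  push_cast
  ring_nf

lemma exp_neg_weberPhase_mul_weberFunction (lam : ℝ) (μ : ℂ) {t : ℝ} (ht : 0 < t) :
    Complex.exp (-(I * weberPhase lam t)) * (√t * weberFunction μ ((1 - I) * t)) =
      (t : ℂ) ^ weberOrder lam * weberIntegral 1 μ ((1 - I) * t) := by
  have hexp : Complex.exp (-(I * weberPhase lam t)) * Complex.exp (-(((1 - I) * t) ^ 2 / 4)) =
      Complex.exp (-(I * (lam / 2 * Real.log t : ℝ))) := by
    rw [← Complex.exp_add, weberPhase]
    congr 1
    push_cast
    linear_combination -t ^ 2 / 4 * Complex.I_sq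
  rw [cpow_weberOrder lam ht, ← hexp, weberFunction]
  ring

lemma hasWKBAmplitude_weberWave (lam : ℝ) :
    HasWKBAmplitude (weberPhase lam) (weberWave lam) (weberWaveVelocity lam)
      (weberAmplitude lam) := by
  have hre : 0 < (1 - I).re := by simp
  have hν := tendsto_cpow_mul_weberIntegral (weberOrder_re_pos lam) hre
  have hν₁ := tendsto_cpow_mul_weberIntegral (weberOrder_add_one_re_pos lam) hre
  have hinv : Tendsto (fun t : ℝ => (((t ^ 2)⁻¹ : ℝ) : ℂ)) atTop (𝓝 0) := by
    rw [← Complex.ofReal_zero]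
    exact (Complex.continuous_ofReal.tendsto 0).comp
      (tendsto_pow_atTop two_ne_zero).inv_tendsto_atTop
  refine ⟨hν.congr' ?_, ?_⟩
  · filter_upwards [eventually_gt_atTop 0] with t ht
    exact (exp_neg_weberPhase_mul_weberFunction lam _ ht).symm
  · have hlim := ((hinv.mul hν₁).add (hν.const_mul ((1 - I) / 2))).const_mul (-(1 - I))
    rw [zero_mul, zero_add, ← weberAmplitude, show -(1 - I) * ((1 - I) / 2 * weberAmplitude lam) =
      I * weberAmplitude lam by linear_combination -weberAmplitude lam / 2 * one_sub_I_sq] at hlim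
    refine hlim.congr' ?_
    filter_upwards [eventually_gt_atTop 0] with t ht
    have ht' : (t : ℂ) ≠ 0 := by exact_mod_cast ht.ne'
    have hsqrt : (√t : ℂ) ≠ 0 := by exact_mod_cast (Real.sqrt_pos.2 ht).ne'
    have hsq : (√t : ℂ) ^ 2 = t := by exact_mod_cast Real.sq_sqrt ht.le
    have hdiv : weberWaveVelocity lam t / √t = √t * weberWaveVelocity lam t / t := by
      rw [← hsq]; field_simp
    rw [hdiv, weberWaveVelocity, Complex.cpow_add _ _ ht', Complex.cpow_one]
    have h₀ := exp_neg_weberPhase_mul_weberFunction lam (weberOrder lam) ht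
    have h₁ := exp_neg_weberPhase_mul_weberFunction lam (weberOrder lam + 1) ht
    push_cast
    field_simp
    linear_combination (1 - I) * (2 * h₁ + (1 - I) * t * h₀)

lemma weberAmplitude_ne_zero (lam : ℝ) : weberAmplitude lam ≠ 0 :=
  mul_ne_zero (Complex.Gamma_ne_zero_of_re_pos (weberOrder_re_pos lam))
    fun h => one_sub_I_ne_zero ((Complex.cpow_eq_zero_iff _ _).1 h).1

lemma weberWave_zero (lam : ℝ) : weberWave lam 0 = weberFunction (weberOrder lam) 0 := by
  rw [weberWave, Complex.ofReal_zero, mul_zero]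

lemma weberWaveVelocity_zero (lam : ℝ) :
    weberWaveVelocity lam 0 = -((1 - I) * weberFunction (weberOrder lam + 1) 0) := by
  rw [weberWaveVelocity, Complex.ofReal_zero, mul_zero]
  ring

lemma im_conj_weberWave_zero_mul (lam : ℝ) :
    (conj (weberWave lam 0) * weberWaveVelocity lam 0).im =
      Complex.normSq (weberAmplitude lam) :=
  (hasWKBAmplitude_weberWave lam).im_conj_mul (isOscillatorSolution_weberWave lam)

lemma weberAmplitude_eq_div (lam : ℝ) :
    weberAmplitude lam = weberFunction (weberOrder lam) 0 * weberFunction (weberOrder lam + 1) 0 *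
      (1 - I) ^ (-weberOrder lam) / √(π / 2) := by
  have hsqrt : (√(π / 2) : ℂ) ≠ 0 := by
    exact_mod_cast (Real.sqrt_pos.2 (half_pos pi_pos)).ne'
  rw [weberFunction_zero_mul_weberFunction_add_one_zero (weberOrder_re_pos lam), weberAmplitude,
    mul_assoc, mul_div_cancel_left₀ _ hsqrt]

lemma conj_weberOrder (lam : ℝ) : conj (weberOrder lam) = (1 + I * lam) / 2 := by
  simp only [weberOrder, map_div₀, map_sub, map_mul, map_one, map_ofNat, Complex.conj_I,
    Complex.conj_ofReal]
  ring

lemma exists_I_mul_conj_weberWaveVelocity_mul_weberAmplitude_eq (lam : ℝ) :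
    ∃ c : ℝ, 0 < c ∧ I * conj (weberWaveVelocity lam 0) * weberAmplitude lam =
      c * (1 / Complex.Gamma ((1 + I * lam) / 4) * Complex.exp (-(I * (π / 8 : ℝ)))) := by
  obtain ⟨c, hc, hcp⟩ := exists_weberFunction_zero_mul_one_sub_I_cpow_eq (weberOrder_re_pos lam)
  have hnorm := Complex.normSq_pos.2 (weberFunction_zero_ne_zero (weberOrder_add_one_re_pos lam))
  refine ⟨√2 * Complex.normSq (weberFunction (weberOrder lam + 1) 0) / √(π / 2) * c,
    by positivity, ?_⟩
  have hphase : (1 - I) * Complex.exp (I * (π / 4 * (1 / 2) : ℝ)) =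
      √2 * Complex.exp (-(I * (π / 8 : ℝ))) := by
    rw [one_sub_I_eq_sqrt_two_mul_exp, mul_assoc, ← Complex.exp_add]
    push_cast
    ring_nf
  rw [conj_weberOrder, weberOrder_re, div_div, show (2 * 2 : ℂ) = 4 by norm_num] at hcp
  have hconj : conj (weberWaveVelocity lam 0) =
      -((1 + I) * conj (weberFunction (weberOrder lam + 1) 0)) := by
    simp only [weberWaveVelocity_zero, map_neg, map_mul, map_sub, map_one, Complex.conj_I,
      sub_neg_eq_add]
  rw [hconj, weberAmplitude_eq_div]
  push_cast [Complex.normSq_eq_conj_mul_self] at hcp hphase ⊢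
  generalize weberFunction (weberOrder lam + 1) 0 = y
  linear_combination (1 - I) * conj y * y / √(π / 2) * hcp +
    conj y * y / √(π / 2) * c / Complex.Gamma ((1 + I * lam) / 4) * hphase -
    conj y * y / √(π / 2) * weberFunction (weberOrder lam) 0 * (1 - I) ^ (-weberOrder lam) *
      Complex.I_sq

lemma exists_neg_I_mul_conj_weberWave_mul_weberAmplitude_eq (lam : ℝ) :
    ∃ c : ℝ, 0 < c ∧ -I * conj (weberWave lam 0) * weberAmplitude lam =
      c * (1 / Complex.Gamma ((3 + I * lam) / 4) * Complex.exp (-(I * (3 * π / 8 : ℝ)))) := by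
  obtain ⟨c, hc, hcm⟩ :=
    exists_weberFunction_zero_mul_one_sub_I_cpow_eq (weberOrder_add_one_re_pos lam)
  have hnorm := Complex.normSq_pos.2 (weberFunction_zero_ne_zero (weberOrder_re_pos lam))
  refine ⟨√2 * Complex.normSq (weberFunction (weberOrder lam) 0) / √(π / 2) * c,
    by positivity, ?_⟩
  have hphase : -I * (1 - I) * Complex.exp (I * (π / 4 * (3 / 2) : ℝ)) =
      √2 * Complex.exp (-(I * (3 * π / 8 : ℝ))) := by
    rw [← Complex.exp_neg_pi_div_two_mul_I, one_sub_I_eq_sqrt_two_mul_exp, mul_left_comm,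
      mul_assoc, ← Complex.exp_add, ← Complex.exp_add]
    push_cast
    ring_nf
  have hcpow : (1 - I) ^ (-weberOrder lam) = (1 - I) * (1 - I) ^ (-(weberOrder lam + 1)) := by
    rw [neg_add', Complex.cpow_sub _ _ one_sub_I_ne_zero, Complex.cpow_one,
      mul_div_cancel₀ _ one_sub_I_ne_zero]
  have hconj : conj (weberOrder lam + 1) / 2 = (3 + I * lam) / 4 := by
    rw [map_add, conj_weberOrder, map_one]; ring
  rw [hconj, weberOrder_add_one_re] at hcm
  rw [weberWave_zero, weberAmplitude_eq_div, hcpow]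
  push_cast [Complex.normSq_eq_conj_mul_self] at hcm hphase ⊢
  generalize weberFunction (weberOrder lam) 0 = y
  linear_combination -I * (1 - I) * conj y * y / √(π / 2) * hcm +
    conj y * y / √(π / 2) * c / Complex.Gamma ((3 + I * lam) / 4) * hphase

lemma exists_weberWave_coeff_even (lam : ℝ) :
    ∃ (α : ℂ) (c : ℝ), c ≠ 0 ∧ (α * weberWave lam 0).re = 1 ∧
      (α * weberWaveVelocity lam 0).re = 0 ∧ α * weberAmplitude lam =
        2 * c * (1 / Complex.Gamma ((1 + I * lam) / 4) * Complex.exp (-(I * (π / 8 : ℝ)))) := by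
  obtain ⟨c, hc, hamp⟩ := exists_I_mul_conj_weberWaveVelocity_mul_weberAmplitude_eq lam
  have hN := Complex.normSq_pos.2 (weberAmplitude_ne_zero lam)
  have him := im_conj_weberWave_zero_mul lam
  generalize Complex.normSq (weberAmplitude lam) = N at hN him
  refine ⟨(N⁻¹ : ℝ) * (I * conj (weberWaveVelocity lam 0)), c / (2 * N), by positivity, ?_, ?_, ?_⟩
  · rw [mul_assoc, Complex.re_ofReal_mul, inv_mul_eq_one₀ hN.ne', ← him]
    simp only [Complex.mul_re, Complex.mul_im, Complex.I_re, Complex.I_im, Complex.conj_re,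
      Complex.conj_im]
    ring
  · rw [mul_assoc, Complex.re_ofReal_mul, mul_assoc, ← Complex.normSq_eq_conj_mul_self,
      Complex.re_mul_ofReal, Complex.I_re, zero_mul, mul_zero]
  · rw [mul_assoc, hamp]
    push_cast
    field_simp

lemma exists_weberWave_coeff_odd (lam : ℝ) :
    ∃ (α : ℂ) (c : ℝ), c ≠ 0 ∧ (α * weberWave lam 0).re = 0 ∧
      (α * weberWaveVelocity lam 0).re = 1 ∧ α * weberAmplitude lam =
        2 * c * (1 / Complex.Gamma ((3 + I * lam) / 4) * Complex.exp (-(I * (3 * π / 8 : ℝ)))) := by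
  obtain ⟨c, hc, hamp⟩ := exists_neg_I_mul_conj_weberWave_mul_weberAmplitude_eq lam
  have hN := Complex.normSq_pos.2 (weberAmplitude_ne_zero lam)
  have him := im_conj_weberWave_zero_mul lam
  generalize Complex.normSq (weberAmplitude lam) = N at hN him
  refine ⟨(N⁻¹ : ℝ) * (-I * conj (weberWave lam 0)), c / (2 * N), by positivity, ?_, ?_, ?_⟩
  · rw [mul_assoc, Complex.re_ofReal_mul, mul_assoc, ← Complex.normSq_eq_conj_mul_self,
      Complex.re_mul_ofReal, Complex.neg_re, Complex.I_re, neg_zero, zero_mul, mul_zero]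
  · rw [mul_assoc, Complex.re_ofReal_mul, inv_mul_eq_one₀ hN.ne', ← him, mul_assoc, neg_mul,
      Complex.neg_re, Complex.I_mul_re, neg_neg]
  · rw [mul_assoc, hamp]
    push_cast
    field_simp

end WeberWave

theorem gapped_weber_solutions_asymptotics_general (lam : ℝ) :
    ∃ (xp vp xm vm : ℝ → ℝ) (ap am : ℝ),
      ap ≠ 0 ∧ am ≠ 0 ∧
      (∀ t, HasDerivAt xp (vp t) t) ∧
      (∀ t, HasDerivAt vp (-((t ^ 2 + lam) * xp t)) t) ∧
      (∀ t, HasDerivAt xm (vm t) t) ∧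
      (∀ t, HasDerivAt vm (-((t ^ 2 + lam) * xm t)) t) ∧
      (∀ t, xp (-t) = xp t) ∧ (∀ t, xm (-t) = -xm t) ∧
      (∀ t, xp t * vm t - vp t * xm t = 1) ∧
      (letI γp : ℂ := 1 / Complex.Gamma ((1 + Complex.I * (lam : ℂ)) / 4)
       letI γm : ℂ := 1 / Complex.Gamma ((3 + Complex.I * (lam : ℂ)) / 4)
       letI θp : ℝ → ℝ := fun t => t ^ 2 / 2 + lam / 2 * Real.log t - π / 8
       letI θm : ℝ → ℝ := fun t => t ^ 2 / 2 + lam / 2 * Real.log t - 3 * π / 8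
       Tendsto (fun t : ℝ => ((Real.sqrt t * xp t : ℝ) : ℂ)
           - (ap : ℂ) * (γp * Complex.exp (Complex.I * (θp t : ℂ))
               + (starRingEnd ℂ) (γp * Complex.exp (Complex.I * (θp t : ℂ)))))
         atTop (nhds 0) ∧
       Tendsto (fun t : ℝ => ((Real.sqrt t * xm t : ℝ) : ℂ)
           - (am : ℂ) * (γm * Complex.exp (Complex.I * (θm t : ℂ))
               + (starRingEnd ℂ) (γm * Complex.exp (Complex.I * (θm t : ℂ)))))
         atTop (nhds 0) ∧
       Tendsto (fun t : ℝ => ((vp t / Real.sqrt t : ℝ) : ℂ)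
           - (ap : ℂ) * (Complex.I * γp * Complex.exp (Complex.I * (θp t : ℂ))
               + (starRingEnd ℂ) (Complex.I * γp * Complex.exp (Complex.I * (θp t : ℂ)))))
         atTop (nhds 0) ∧
       Tendsto (fun t : ℝ => ((vm t / Real.sqrt t : ℝ) : ℂ)
           - (am : ℂ) * (Complex.I * γm * Complex.exp (Complex.I * (θm t : ℂ))
               + (starRingEnd ℂ) (Complex.I * γm * Complex.exp (Complex.I * (θm t : ℂ)))))
         atTop (nhds 0)) := by
  obtain ⟨αp, ap, hap, hxp0, hvp0, hAp⟩ := exists_weberWave_coeff_even lam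
  obtain ⟨αm, am, ham, hxm0, hvm0, hAm⟩ := exists_weberWave_coeff_odd lam
  have hp := (isOscillatorSolution_weberWave lam).re_mul αp
  have hm := (isOscillatorSolution_weberWave lam).re_mul αm
  have hwkbp := (hasWKBAmplitude_weberWave lam).const_mul αp
  have hwkbm := (hasWKBAmplitude_weberWave lam).const_mul αm
  rw [hAp] at hwkbp
  rw [hAm] at hwkbm
  have hq : ∀ t : ℝ, (-t) ^ 2 + lam = t ^ 2 + lam := fun t => by rw [neg_sq]
  have hwronskian := hp.wronskian_eq hm
  rw [hxp0, hvp0, hvm0, zero_mul, mul_one, sub_zero] at hwronskian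
  exact ⟨_, _, _, _, ap, am, hap, ham, hp.hasDerivAt, hp.hasDerivAt_velocity, hm.hasDerivAt,
    hm.hasDerivAt_velocity, hp.even_of_initial hm hq hxp0 hvp0 hvm0,
    hp.odd_of_initial hm hq hxp0 hxm0 hvm0, hwronskian, hwkbp.tendsto_re_sub,
    hwkbm.tendsto_re_sub, hwkbp.tendsto_re_velocity_sub, hwkbm.tendsto_re_velocity_sub⟩

/-- Existence of Wronskian-normalized even/odd solutions of the gapped
Weber equation `ẍ + (t² + δ²)x = 0`, with asymptotics expressed through
`γ₊ = 1/Γ((1+iδ²)/4)`, `γ₋ = 1/Γ((3+iδ²)/4)` and WKB phases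
`θ_±(t) = t²/2 + (δ²/2)log t − π/8` resp. `− 3π/8`. -/
theorem gapped_weber_solutions_asymptotics (δ : ℝ) :
    ∃ (xp vp xm vm : ℝ → ℝ) (ap am : ℝ),
      ap ≠ 0 ∧ am ≠ 0 ∧
      (∀ t, HasDerivAt xp (vp t) t) ∧
      (∀ t, HasDerivAt vp (-((t ^ 2 + δ ^ 2) * xp t)) t) ∧
      (∀ t, HasDerivAt xm (vm t) t) ∧
      (∀ t, HasDerivAt vm (-((t ^ 2 + δ ^ 2) * xm t)) t) ∧
      (∀ t, xp (-t) = xp t) ∧ (∀ t, xm (-t) = -xm t) ∧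
      (∀ t, xp t * vm t - vp t * xm t = 1) ∧
      (letI γp : ℂ := 1 / Complex.Gamma ((1 + Complex.I * (δ : ℂ) ^ 2) / 4)
       letI γm : ℂ := 1 / Complex.Gamma ((3 + Complex.I * (δ : ℂ) ^ 2) / 4)
       letI θp : ℝ → ℝ := fun t => t ^ 2 / 2 + δ ^ 2 / 2 * Real.log t - π / 8
       letI θm : ℝ → ℝ := fun t => t ^ 2 / 2 + δ ^ 2 / 2 * Real.log t - 3 * π / 8
       Tendsto (fun t : ℝ => ((Real.sqrt t * xp t : ℝ) : ℂ)
           - (ap : ℂ) * (γp * Complex.exp (Complex.I * (θp t : ℂ))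
               + (starRingEnd ℂ) (γp * Complex.exp (Complex.I * (θp t : ℂ)))))
         atTop (nhds 0) ∧
       Tendsto (fun t : ℝ => ((Real.sqrt t * xm t : ℝ) : ℂ)
           - (am : ℂ) * (γm * Complex.exp (Complex.I * (θm t : ℂ))
               + (starRingEnd ℂ) (γm * Complex.exp (Complex.I * (θm t : ℂ)))))
         atTop (nhds 0) ∧
       Tendsto (fun t : ℝ => ((vp t / Real.sqrt t : ℝ) : ℂ)
           - (ap : ℂ) * (Complex.I * γp * Complex.exp (Complex.I * (θp t : ℂ))
               + (starRingEnd ℂ) (Complex.I * γp * Complex.exp (Complex.I * (θp t : ℂ)))))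
         atTop (nhds 0) ∧
       Tendsto (fun t : ℝ => ((vm t / Real.sqrt t : ℝ) : ℂ)
           - (am : ℂ) * (Complex.I * γm * Complex.exp (Complex.I * (θm t : ℂ))
               + (starRingEnd ℂ) (Complex.I * γm * Complex.exp (Complex.I * (θm t : ℂ)))))
         atTop (nhds 0)) := by
  rw [← Complex.ofReal_pow]
  exact gapped_weber_solutions_asymptotics_general (δ ^ 2)
end
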